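/- arXiv:1701.00766 — 3 statements merged into one kernel-verified Lean document; each statement's English description precedes it below -/
import Mathlib

section
/- Let X = (X_1,…,X_k) ∈ D^k(H)^-. Then there exists c > 0 with 𝒫(R, rX) ≤ c²·I for all r ∈ [0,1) if and only if the spectral radius of X_i is strictly less than 1 for every i ∈ {1,…,k}. -/
open ContinuousLinearMap

noncomputable section

/-- `ℓ²(ℕ^k; H)`. -/
abbrev L2 (k : ℕ) (H : Type*) [NormedAddCommGroup H] : Type _ :=
  lp (fun _ : Fin k → ℕ => H) 2

variable {k : ℕ} {H : Type*} [NormedAddCommGroup H] [InnerProductSpace ℂ H] [CompleteSpace H]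

/-- The Loewner (operator) order: `S ≤ T` iff `T - S` is a positive operator. -/
def opLE {E : Type*} [NormedAddCommGroup E] [InnerProductSpace ℂ E] [CompleteSpace E]
    (S T : E →L[ℂ] E) : Prop := (T - S).IsPositive

/-- The defect operator `Δ_X(I) = (id - Φ_{X_1}) ∘ ⋯ ∘ (id - Φ_{X_k})(I)`,
where `Φ_{X_i}(Y) = X_i Y X_i*`. -/
def defect (X : Fin k → (H →L[ℂ] H)) : H →L[ℂ] H :=
  ((List.ofFn fun i => fun Y : H →L[ℂ] H => Y - X i * Y * adjoint (X i)).foldr (· ∘ ·) id) 1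

/-- Membership in the regular polydisk `D^k(H)`: pairwise commuting operators of norm `< 1`
with positive invertible defect operator. -/
def memPolydisk (X : Fin k → (H →L[ℂ] H)) : Prop :=
  (∀ i j, Commute (X i) (X j)) ∧ (∀ i, ‖X i‖ < 1) ∧
    (defect X).IsPositive ∧ IsUnit (defect X)

/-- Membership in the closed regular polydisk `D^k(H)⁻`: pairwise commuting contractions `X`
with `rX ∈ D^k(H)` for all `r ∈ (0,1)`. -/
def memClosedPolydisk (X : Fin k → (H →L[ℂ] H)) : Prop :=
  (∀ i j, Commute (X i) (X j)) ∧ (∀ i, ‖X i‖ ≤ 1) ∧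
    ∀ r ∈ Set.Ioo (0 : ℝ) 1, memPolydisk (fun i => ((r : ℂ) • X i))

/-- `P` is the pluriharmonic Poisson kernel `𝒫(R, rX)` on `ℓ²(ℕ^k; H)`: it is characterized by
`⟨𝒫(R,rX)(δ_β h), δ_α ℓ⟩ = r^{Σ|α_i - β_i|} ⟨(∏ X_i^{(β_i-α_i)⁺})(∏ (X_i*)^{(α_i-β_i)⁺}) h, ℓ⟩`. -/
def IsPoissonKernel (X : Fin k → (H →L[ℂ] H)) (r : ℝ)
    (P : L2 k H →L[ℂ] L2 k H) : Prop :=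
  ∀ (α β : Fin k → ℕ) (h ℓ : H),
    inner (𝕜 := ℂ) (P (lp.single 2 β h)) (lp.single 2 α ℓ) =
      ((r ^ (∑ i, ((α i - β i) + (β i - α i))) : ℝ) : ℂ) *
        inner (𝕜 := ℂ)
          (((List.ofFn fun i => X i ^ (β i - α i)).prod *
            (List.ofFn fun i => (adjoint (X i)) ^ (α i - β i)).prod) h) ℓ

/-- The two-sided Harnack-type domination `c⁻² 𝒫(R,rB) ≤ 𝒫(R,rA) ≤ c² 𝒫(R,rB)` for all
`r ∈ [0,1)`, expressed in terms of the Poisson kernel families. -/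
def PoissonSandwich (PA PB : ℝ → (L2 k H →L[ℂ] L2 k H)) (c : ℝ) : Prop :=
  ∀ r ∈ Set.Ico (0 : ℝ) 1,
    opLE (((c : ℂ) ^ 2)⁻¹ • PB r) (PA r) ∧ opLE (PA r) (((c : ℂ) ^ 2) • PB r)

/-- Poisson equivalence of two points, expressed via their Poisson kernel families. -/
def PoissonEquiv (PA PB : ℝ → (L2 k H →L[ℂ] L2 k H)) : Prop :=
  ∃ c : ℝ, 1 ≤ c ∧ PoissonSandwich PA PB c

/-- The Poisson distance `δ_P`, expressed via the Poisson kernel families. -/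
def deltaP (PA PB : ℝ → (L2 k H →L[ℂ] L2 k H)) : ℝ :=
  Real.log (sInf {c : ℝ | 1 ≤ c ∧ PoissonSandwich PA PB c})

/-!
Suppose `𝒫(R, rX) ≤ C` for all `r ∈ [0, 1)`, and that the spectral radius of `X_i` is at least `1`.
A spectral value `z` of `X_i` of maximal modulus lies on the frontier of the spectrum, so it has
approximate eigenvectors `x_l`. Choose a unimodular `w` with `w z = |z|`. Testing the inequality on
`∑_{m < N} δ_{m e_i} (w ^ m x_l)` and letting `l → ∞` gives `∑_{m, n < N} (r |z|) ^ |m - n| ≤ C N`;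
as `r → 1` the left-hand side becomes at least `N²`, which is absurd for large `N`.

Conversely, the `(α, β)` entry of `𝒫(R, rX)` has norm at most `∏_i ‖X_i ^ |α_i - β_i|‖`. If all the
spectral radii are less than `1`, these weights are summable over `α - β ∈ ℤ^k`, so the Schur test
bounds `‖𝒫(R, rX)‖` uniformly in `r`. Commutativity makes `𝒫(R, rX)` self-adjoint, which turns the
norm bound into an operator inequality.
-/

open Filter Topology ComplexConjugate

section ApproximateEigenvectors

section NontriviallyNormedField

variable {𝕜 E : Type*} [NontriviallyNormedField 𝕜] [NormedAddCommGroup E] [NormedSpace 𝕜 E]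

/-- `x` is a sequence of approximate eigenvectors of `T` for the approximate eigenvalue `z`,
normalised to have norm one. -/
structure IsApproxEigenseq (T : E →L[𝕜] E) (z : 𝕜) (x : ℕ → E) : Prop where
  norm_eq_one : ∀ n, ‖x n‖ = 1
  tendsto_sub : Tendsto (fun n ↦ T (x n) - z • x n) atTop (𝓝 0)

theorem IsApproxEigenseq.pow {T : E →L[𝕜] E} {z : 𝕜} {x : ℕ → E}
    (hx : IsApproxEigenseq T z x) (m : ℕ) : IsApproxEigenseq (T ^ m) (z ^ m) x := by
  refine ⟨hx.norm_eq_one, ?_⟩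
  induction m with
  | zero => simp
  | succ m ih =>
    have split (y : E) : (T ^ (m + 1)) y - z ^ (m + 1) • y =
        T ((T ^ m) y - z ^ m • y) + z ^ m • (T y - z • y) := by
      rw [pow_succ', mul_apply_eq_comp, map_sub, map_smul, smul_sub, pow_succ, mul_smul]
      abel
    simpa only [split, Function.comp_apply, map_zero, smul_zero, add_zero] using
      ((T.continuous.tendsto 0).comp ih).add (hx.tendsto_sub.const_smul (z ^ m))

theorem isUnit_of_norm_sub_lt_of_le_norm_apply [CompleteSpace E] {T : E →L[𝕜] E}
    {u : (E →L[𝕜] E)ˣ} {ε : ℝ} (hu : ∀ x, ε * ‖x‖ ≤ ‖(u : E →L[𝕜] E) x‖) (hT : ‖T - u‖ < ε) :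
    IsUnit T := by
  nontriviality E →L[𝕜] E
  have hε : 0 < ε := (norm_nonneg _).trans_lt hT
  have hinv : ‖(↑u⁻¹ : E →L[𝕜] E)‖ ≤ ε⁻¹ := by
    refine opNorm_le_bound _ (inv_nonneg.mpr hε.le) fun y ↦ ?_
    rw [inv_mul_eq_div, le_div_iff₀' hε]
    simpa only [← mul_apply_eq_comp, Units.mul_inv, one_apply_eq_self] using
      hu ((↑u⁻¹ : E →L[𝕜] E) y)
  exact (Units.ofNearby u T (hT.trans_le (le_inv_of_le_inv₀ (Units.norm_pos u⁻¹) hinv))).isUnit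

theorem exists_norm_apply_sub_smul_lt_of_mem_frontier_spectrum [CompleteSpace E] {T : E →L[𝕜] E}
    {z : 𝕜} (hz : z ∈ frontier (spectrum 𝕜 T)) {ε : ℝ} (hε : 0 < ε) :
    ∃ x, ‖T x - z • x‖ < ε * ‖x‖ := by
  by_contra! hbelow
  rw [frontier_eq_closure_inter_closure, (spectrum.isClosed T).closure_eq] at hz
  obtain ⟨w, hw, hzw⟩ := Metric.mem_closure_iff.mp hz.2 (ε / 2) (half_pos hε)
  rw [dist_eq_norm] at hzw
  obtain ⟨u, hu⟩ : IsUnit (algebraMap 𝕜 (E →L[𝕜] E) w - T) := not_not.mp hw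
  refine hz.1 (isUnit_of_norm_sub_lt_of_le_norm_apply (u := u) (ε := ε / 2) (fun x ↦ ?_) ?_)
  · have hux : (u : E →L[𝕜] E) x = -((T x - z • x) + (z - w) • x) := by
      simp only [hu, Algebra.algebraMap_eq_smul_one, sub_apply, smul_apply, one_apply_eq_self]
      module
    have hsmul : ‖(z - w) • x‖ ≤ ε / 2 * ‖x‖ := by rw [norm_smul]; gcongr
    rw [hux, norm_neg]
    linarith [hbelow x, norm_sub_le_norm_add (T x - z • x) ((z - w) • x)]
  · calc ‖algebraMap 𝕜 (E →L[𝕜] E) z - T - u‖ = ‖(z - w) • (1 : E →L[𝕜] E)‖ := by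
          rw [hu, sub_sub_sub_cancel_right, ← map_sub, Algebra.algebraMap_eq_smul_one]
      _ ≤ ‖z - w‖ := by
          rw [norm_smul]; exact mul_le_of_le_one_right (norm_nonneg _) norm_id_le
      _ < ε / 2 := hzw

end NontriviallyNormedField

variable {𝕜 E : Type*} [RCLike 𝕜] [NormedAddCommGroup E]

theorem exists_isApproxEigenseq_of_mem_frontier_spectrum [NormedSpace 𝕜 E] [CompleteSpace E]
    {T : E →L[𝕜] E} {z : 𝕜} (hz : z ∈ frontier (spectrum 𝕜 T)) :
    ∃ x, IsApproxEigenseq T z x := by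
  choose y hy using fun n : ℕ ↦ exists_norm_apply_sub_smul_lt_of_mem_frontier_spectrum hz
    (Nat.one_div_pos_of_nat (α := ℝ) (n := n))
  have hy0 (n : ℕ) : 0 < ‖y n‖ := by
    refine norm_pos_iff.mpr fun h ↦ ?_
    simpa [h] using hy n
  refine ⟨fun n ↦ (‖y n‖⁻¹ : 𝕜) • y n, fun n ↦ norm_smul_inv_norm (norm_pos_iff.mp (hy0 n)),
    squeeze_zero_norm (fun n ↦ ?_) tendsto_one_div_add_atTop_nhds_zero_nat⟩
  rw [map_smul, smul_comm, ← smul_sub, norm_smul, norm_inv, norm_algebraMap', norm_norm,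
    inv_mul_le_iff₀ (hy0 n), mul_comm]
  exact (hy n).le

theorem exists_mem_frontier_spectrum_nnnorm_eq_spectralRadius {A : Type*} [NormedRing A]
    [NormedAlgebra 𝕜 A] [CompleteSpace A] {a : A} (ha : (spectrum 𝕜 a).Nonempty) :
    ∃ z ∈ frontier (spectrum 𝕜 a), (‖z‖₊ : ENNReal) = spectralRadius 𝕜 a := by
  obtain ⟨z, hz, hza⟩ := spectrum.exists_nnnorm_eq_spectralRadius_of_nonempty ha
  refine ⟨z, ⟨subset_closure hz, fun hint ↦ ?_⟩, hza⟩
  have hball : spectrum 𝕜 a ⊆ Metric.closedBall 0 ‖z‖ := fun w hw ↦ by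
    have hwz : (‖w‖₊ : ENNReal) ≤ ‖z‖₊ := hza ▸ le_iSup₂ (α := ENNReal) w hw
    simpa using! ENNReal.coe_le_coe.mp hwz
  let : NormedSpace ℝ 𝕜 := inferInstance
  simpa [interior_closedBall'] using interior_mono hball hint

theorem IsApproxEigenseq.tendsto_inner [InnerProductSpace 𝕜 E] {T : E →L[𝕜] E} {z : 𝕜}
    {x : ℕ → E} (hx : IsApproxEigenseq T z x) :
    Tendsto (fun n ↦ inner 𝕜 (x n) (T (x n))) atTop (𝓝 z) := by
  have herr : Tendsto (fun n ↦ inner 𝕜 (x n) (T (x n) - z • x n)) atTop (𝓝 0) :=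
    squeeze_zero_norm
      (fun n ↦ (norm_inner_le_norm _ _).trans_eq (by rw [hx.norm_eq_one, one_mul]))
      (tendsto_zero_iff_norm_tendsto_zero.mp hx.tendsto_sub)
  simpa [inner_sub_right, inner_smul_right, inner_self_eq_norm_sq_to_K, hx.norm_eq_one]
    using herr.add_const z

end ApproximateEigenvectors

section ListProducts

theorem prod_ofFn_eq_apply {M : Type*} [Monoid M] {n : ℕ} {f : Fin n → M} (i : Fin n)
    (hf : ∀ j ≠ i, f j = 1) : (List.ofFn f).prod = f i := by
  rw [List.ofFn_eq_map, List.prod_map_eq_pow_single i f fun j hj _ ↦ hf j hj,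
    List.count_eq_one_of_mem (List.nodup_finRange n) (List.mem_finRange i), pow_one]

theorem norm_prod_ofFn_le {R : Type*} [SeminormedRing R] [NormOneClass R] {n : ℕ}
    (f : Fin n → R) : ‖(List.ofFn f).prod‖ ≤ ∏ i, ‖f i‖ := by
  simpa [List.map_ofFn, List.prod_ofFn] using List.norm_prod_le (List.ofFn f)

theorem star_list_prod {R : Type*} [Monoid R] [StarMul R] (l : List R) :
    star l.prod = (l.map star).reverse.prod := by
  induction l with
  | nil => simp
  | cons a l ih => simp [ih]

theorem star_prod_ofFn_of_commute {R : Type*} [Monoid R] [StarMul R] {n : ℕ} {f : Fin n → R}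
    (hf : ∀ i j, Commute (f i) (f j)) :
    star (List.ofFn f).prod = (List.ofFn fun i ↦ star (f i)).prod := by
  rw [star_list_prod, List.map_ofFn]
  refine (List.reverse_perm _).prod_eq' (List.pairwise_of_forall_mem_list ?_)
  simp only [List.mem_reverse, List.mem_ofFn', Set.mem_range]
  rintro _ ⟨i, rfl⟩ _ ⟨j, rfl⟩
  exact (hf i j).star_star

end ListProducts

theorem norm_sum_lp_single_sq {ι : Type*} [DecidableEq ι] {E : ι → Type*}
    [∀ i, NormedAddCommGroup (E i)] (s : Finset ι) (f : ∀ i, E i) :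
    ‖∑ i ∈ s, lp.single 2 i (f i)‖ ^ 2 = ∑ i ∈ s, ‖f i‖ ^ 2 := by
  simpa using! lp.norm_sum_single (p := 2) (by norm_num) f s

section LowerBound

theorem re_sum_inner_single_le_of_opLE {ι E : Type*} [DecidableEq ι] [NormedAddCommGroup E]
    [InnerProductSpace ℂ E] [CompleteSpace E]
    {A : lp (fun _ : ι ↦ E) 2 →L[ℂ] lp (fun _ : ι ↦ E) 2} {C : ℝ} (hA : opLE A ((C : ℂ) • 1))
    (s : Finset ι) (f : ι → E) :
    ∑ i ∈ s, ∑ j ∈ s, (inner ℂ (A (lp.single 2 i (f i))) (lp.single 2 j (f j))).re ≤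
      C * ∑ i ∈ s, ‖f i‖ ^ 2 := by
  have hpos := hA.re_inner_nonneg_left (∑ i ∈ s, lp.single 2 i (f i))
  rw [sub_apply, smul_apply, one_apply_eq_self, inner_sub_left, inner_smul_left,
    inner_self_eq_norm_sq_to_K, map_sum, sum_inner] at hpos
  simp only [inner_sum, map_sub, map_sum, RCLike.re_to_complex] at hpos
  have hC : (conj (C : ℂ) * ((‖∑ i ∈ s, lp.single (E := fun _ : ι ↦ E) 2 i (f i)‖ : ℂ)) ^ 2).re =
      C * ∑ i ∈ s, ‖f i‖ ^ 2 := by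
    rw [← norm_sum_lp_single_sq, Complex.conj_ofReal]
    exact_mod_cast Complex.ofReal_re _
  exact sub_nonneg.mp (hC ▸ hpos)

theorem re_inner_pow_adjoint_pow_smul {𝕜 E : Type*} [RCLike 𝕜] [NormedAddCommGroup E]
    [InnerProductSpace 𝕜 E] [CompleteSpace E] (T : E →L[𝕜] E) {w : 𝕜} (hw : ‖w‖ = 1) (m n : ℕ)
    (x : E) :
    RCLike.re (inner 𝕜 ((T ^ (m - n) * adjoint T ^ (n - m)) (w ^ m • x)) (w ^ n • x)) =
      RCLike.re (w ^ Nat.dist m n * inner 𝕜 x ((T ^ Nat.dist m n) x)) := by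
  have hww (a : ℕ) : conj w ^ a * w ^ a = 1 := by
    rw [← mul_pow, RCLike.conj_mul, hw]; simp
  rcases le_total n m with hle | hle
  · obtain ⟨a, rfl⟩ := Nat.exists_eq_add_of_le hle
    rw [Nat.dist_eq_sub_of_le_right hle, Nat.sub_eq_zero_of_le hle, Nat.add_sub_cancel_left,
      pow_zero, mul_one, ← RCLike.conj_re, map_smul, inner_smul_left, inner_smul_right]
    congr 1
    simp only [map_mul, map_pow, RCLike.conj_conj, inner_conj_symm]
    linear_combination (w ^ a * inner 𝕜 x ((T ^ a) x)) * hww n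
  · obtain ⟨a, rfl⟩ := Nat.exists_eq_add_of_le hle
    rw [Nat.dist_eq_sub_of_le hle, Nat.sub_eq_zero_of_le hle, Nat.add_sub_cancel_left,
      pow_zero, one_mul, ← star_eq_adjoint, ← star_pow, star_eq_adjoint, adjoint_inner_left,
      map_smul, inner_smul_left, inner_smul_right]
    congr 1
    simp only [map_pow]
    linear_combination (w ^ a * inner 𝕜 x ((T ^ a) x)) * hww m

namespace IsPoissonKernel

theorem inner_single_piSingle {X : Fin k → (H →L[ℂ] H)} {r : ℝ} {P : L2 k H →L[ℂ] L2 k H}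
    (hP : IsPoissonKernel X r P) (i : Fin k) (m n : ℕ) (x y : H) :
    inner ℂ (P (lp.single 2 (Pi.single i m) x)) (lp.single 2 (Pi.single i n) y) =
      ((r ^ Nat.dist m n : ℝ) : ℂ) *
        inner ℂ ((X i ^ (m - n) * adjoint (X i) ^ (n - m)) x) y := by
  have hoff (a b : ℕ) (j : Fin k) (hj : j ≠ i) :
      (Pi.single i a : Fin k → ℕ) j - (Pi.single i b : Fin k → ℕ) j = 0 := by simp [hj]
  rw [hP, prod_ofFn_eq_apply i fun j hj ↦ by rw [hoff m n j hj, pow_zero],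
    prod_ofFn_eq_apply i fun j hj ↦ by rw [hoff n m j hj, pow_zero],
    Finset.sum_eq_single i (fun j _ hj ↦ by rw [hoff n m j hj, hoff m n j hj, add_zero]) (by simp),
    Nat.dist_comm]
  simp [Nat.dist]

theorem sum_sum_pow_dist_le {X : Fin k → (H →L[ℂ] H)} {r : ℝ} {P : L2 k H →L[ℂ] L2 k H}
    (hP : IsPoissonKernel X r P) {C : ℝ} (hC : opLE P ((C : ℂ) • 1)) {i : Fin k} {z : ℂ}
    (hz : z ∈ frontier (spectrum ℂ (X i))) (N : ℕ) :
    ∑ m ∈ Finset.range N, ∑ n ∈ Finset.range N, (r * ‖z‖) ^ Nat.dist m n ≤ C * N := by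
  obtain ⟨x, hx⟩ := exists_isApproxEigenseq_of_mem_frontier_spectrum hz
  obtain ⟨w, hw, hwz⟩ := Complex.exists_norm_eq_mul_self z
  have hquad (l : ℕ) : ∑ m ∈ Finset.range N, ∑ n ∈ Finset.range N, r ^ Nat.dist m n *
      (w ^ Nat.dist m n * inner ℂ (x l) ((X i ^ Nat.dist m n) (x l))).re ≤ C * N := by
    have h := re_sum_inner_single_le_of_opLE hC
      ((Finset.range N).map ⟨Pi.single i, Pi.single_injective i⟩) fun α ↦ w ^ α i • x l
    have hre := re_inner_pow_adjoint_pow_smul (X i) hw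
    simp only [RCLike.re_to_complex] at hre
    simp only [Finset.sum_map, Function.Embedding.coeFn_mk, Pi.single_eq_same,
      hP.inner_single_piSingle, Complex.re_ofReal_mul, hre] at h
    simpa [norm_smul, hw, hx.norm_eq_one, -Complex.mul_re] using h
  have hterm (d : ℕ) : Tendsto (fun l ↦ r ^ d * (w ^ d * inner ℂ (x l) ((X i ^ d) (x l))).re) atTop
      (𝓝 ((r * ‖z‖) ^ d)) := by
    have hlim := (hx.pow d).tendsto_inner.const_mul (w ^ d)
    rw [← mul_pow, ← hwz, ← Complex.ofReal_pow] at hlim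
    simpa only [mul_pow] using! ((Complex.continuous_re.tendsto _).comp hlim).const_mul (r ^ d)
  exact le_of_tendsto' (tendsto_finsetSum _ fun m _ ↦ tendsto_finsetSum _ fun n _ ↦ hterm _) hquad

end IsPoissonKernel

theorem spectralRadius_lt_one_of_forall_opLE {X : Fin k → (H →L[ℂ] H)}
    {P : ℝ → (L2 k H →L[ℂ] L2 k H)} (hP : ∀ r ∈ Set.Ico (0 : ℝ) 1, IsPoissonKernel X r (P r))
    {C : ℝ} (hC : ∀ r ∈ Set.Ico (0 : ℝ) 1, opLE (P r) ((C : ℂ) • 1)) (i : Fin k) :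
    spectralRadius ℂ (X i) < 1 := by
  by_contra! hge
  have hne : (spectrum ℂ (X i)).Nonempty := by
    by_contra hempty
    simp [spectralRadius, Set.not_nonempty_iff_eq_empty.mp hempty] at hge
  obtain ⟨z, hz, hzX⟩ := exists_mem_frontier_spectrum_nnnorm_eq_spectralRadius hne
  have hz1 : 1 ≤ ‖z‖ := by
    rw [← hzX] at hge
    exact_mod_cast hge
  obtain ⟨N, hN⟩ := exists_nat_gt (max C 0)
  have hlimit : ∑ m ∈ Finset.range N, ∑ n ∈ Finset.range N, (1 * ‖z‖) ^ Nat.dist m n ≤ C * N := by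
    refine le_of_tendsto (f := fun r : ℝ ↦
      ∑ m ∈ Finset.range N, ∑ n ∈ Finset.range N, (r * ‖z‖) ^ Nat.dist m n) (x := 𝓝[<] 1)
      ((Continuous.tendsto (by fun_prop) 1).mono_left nhdsWithin_le_nhds) ?_
    filter_upwards [Ico_mem_nhdsLT zero_lt_one] with r hr
    exact (hP r hr).sum_sum_pow_dist_le (hC r hr) hz N
  have hcard : (N : ℝ) * N ≤ ∑ m ∈ Finset.range N, ∑ n ∈ Finset.range N,
      (1 * ‖z‖) ^ Nat.dist m n := by
    simpa using Finset.sum_le_sum fun m (_ : m ∈ Finset.range N) ↦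
      Finset.card_nsmul_le_sum (Finset.range N) (fun n ↦ (1 * ‖z‖) ^ Nat.dist m n) 1
        fun n _ ↦ one_le_pow₀ (by rwa [one_mul])
  have hNC : C * N < N * N := by
    have := (le_max_left C 0).trans_lt hN
    have := (le_max_right C 0).trans_lt hN
    gcongr
  exact (hcard.trans hlimit).not_gt hNC

end LowerBound

section SchurTest

theorem sum_sum_mul_mul_le_of_sum_le {ι κ : Type*} {s : Finset ι} {t : Finset κ}
    {K : ι → κ → ℝ} {C : ℝ} (hK : ∀ i j, 0 ≤ K i j) (hrow : ∀ i ∈ s, ∑ j ∈ t, K i j ≤ C)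
    (hcol : ∀ j ∈ t, ∑ i ∈ s, K i j ≤ C) (a : ι → ℝ) (b : κ → ℝ) :
    ∑ i ∈ s, ∑ j ∈ t, K i j * (a i * b j) ≤
      C * ((∑ i ∈ s, a i ^ 2 + ∑ j ∈ t, b j ^ 2) / 2) := by
  have hamgm (i : ι) (j : κ) : K i j * (a i * b j) ≤ (K i j * a i ^ 2 + K i j * b j ^ 2) / 2 := by
    nlinarith [mul_nonneg (hK i j) (sq_nonneg (a i - b j))]
  have ha : ∑ i ∈ s, ∑ j ∈ t, K i j * a i ^ 2 ≤ C * ∑ i ∈ s, a i ^ 2 := by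
    simp only [← Finset.sum_mul, Finset.mul_sum]
    gcongr with i hi
    exact hrow i hi
  have hb : ∑ i ∈ s, ∑ j ∈ t, K i j * b j ^ 2 ≤ C * ∑ j ∈ t, b j ^ 2 := by
    rw [Finset.sum_comm]
    simp only [← Finset.sum_mul, Finset.mul_sum]
    gcongr with j hj
    exact hcol j hj
  calc ∑ i ∈ s, ∑ j ∈ t, K i j * (a i * b j)
      ≤ ∑ i ∈ s, ∑ j ∈ t, (K i j * a i ^ 2 + K i j * b j ^ 2) / 2 := by gcongr; exact hamgm _ _
    _ = (∑ i ∈ s, ∑ j ∈ t, K i j * a i ^ 2 + ∑ i ∈ s, ∑ j ∈ t, K i j * b j ^ 2) / 2 := by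
      simp only [← Finset.sum_div, Finset.sum_add_distrib]
    _ ≤ C * ((∑ i ∈ s, a i ^ 2 + ∑ j ∈ t, b j ^ 2) / 2) := by linarith

variable {𝕜 ι κ : Type*} [RCLike 𝕜] [DecidableEq ι] [DecidableEq κ] {E : ι → Type*}
  {F : κ → Type*} [∀ i, NormedAddCommGroup (E i)] [∀ i, InnerProductSpace 𝕜 (E i)]
  [∀ j, NormedAddCommGroup (F j)] [∀ j, InnerProductSpace 𝕜 (F j)]

theorem opNorm_le_of_norm_inner_single_le {A : lp E 2 →L[𝕜] lp F 2} {K : ι → κ → ℝ} {C : ℝ}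
    (hK : ∀ i j, 0 ≤ K i j) (hC : 0 ≤ C) (hrow : ∀ i (t : Finset κ), ∑ j ∈ t, K i j ≤ C)
    (hcol : ∀ j (s : Finset ι), ∑ i ∈ s, K i j ≤ C)
    (hA : ∀ i j x y, ‖inner 𝕜 (A (lp.single 2 i x)) (lp.single 2 j y)‖ ≤
      K i j * (‖x‖ * ‖y‖)) : ‖A‖ ≤ C := by
  refine opNorm_le_of_re_inner_le hC fun x y hx hy ↦ ?_
  have hfin (p : Finset ι × Finset κ) :
      RCLike.re (inner 𝕜 (A (∑ i ∈ p.1, lp.single 2 i (x i)))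
        (∑ j ∈ p.2, lp.single 2 j (y j))) ≤
      C * ((‖∑ i ∈ p.1, lp.single 2 i (x i)‖ ^ 2 +
        ‖∑ j ∈ p.2, lp.single 2 j (y j)‖ ^ 2) / 2) := by
    rw [norm_sum_lp_single_sq, norm_sum_lp_single_sq, map_sum, sum_inner]
    simp only [inner_sum, map_sum]
    refine le_trans ?_ (sum_sum_mul_mul_le_of_sum_le hK (fun i _ ↦ hrow i p.2)
      (fun j _ ↦ hcol j p.1) (‖x ·‖) (‖y ·‖))
    gcongr with i _ j _
    exact (RCLike.re_le_norm _).trans (hA i j (x i) (y j))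
  have hxs := (lp.hasSum_single (p := 2) (by norm_num) x).comp
    (tendsto_fst (g := atTop (α := Finset κ)))
  have hys := (lp.hasSum_single (p := 2) (by norm_num) y).comp
    (tendsto_snd (f := atTop (α := Finset ι)))
  have hlim := le_of_tendsto_of_tendsto'
    ((RCLike.continuous_re.tendsto _).comp (((A.continuous.tendsto x).comp hxs).inner hys))
    ((((hxs.norm.pow 2).add (hys.norm.pow 2)).div_const 2).const_mul C) hfin
  simpa [hx, hy] using hlim

theorem eq_of_forall_inner_single_eq {A B : lp E 2 →L[𝕜] lp F 2}
    (h : ∀ i j x y, inner 𝕜 (A (lp.single 2 i x)) (lp.single 2 j y) =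
      inner 𝕜 (B (lp.single 2 i x)) (lp.single 2 j y)) : A = B := by
  refine lp.ext_continuousLinearMap (by norm_num) fun i ↦ ?_
  ext x j
  refine ext_inner_right 𝕜 fun y ↦ ?_
  rw [← lp.inner_single_right, ← lp.inner_single_right]
  exact h i j x y

end SchurTest

section Summability

theorem summable_norm_pow_of_spectralRadius_lt_one {A : Type*} [NormedRing A] [NormedAlgebra ℂ A]
    [CompleteSpace A] {a : A} (ha : spectralRadius ℂ a < 1) : Summable fun n ↦ ‖a ^ n‖ := by
  obtain ⟨ρ, haρ, hρ⟩ := ENNReal.lt_iff_exists_nnreal_btwn.mp ha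
  refine Summable.of_norm_bounded_eventually_nat
    (summable_geometric_of_lt_one ρ.2 (by exact_mod_cast hρ)) ?_
  have hroot := spectrum.pow_nnnorm_pow_one_div_tendsto_nhds_spectralRadius a
  filter_upwards [hroot.eventually_lt_const haρ, eventually_gt_atTop 0] with n hn hn0
  have hpow : (‖a ^ n‖₊ : ENNReal) ≤ (ρ : ENNReal) ^ n := by
    rw [one_div, ENNReal.rpow_inv_lt_iff (by positivity), ENNReal.rpow_natCast] at hn
    exact hn.le
  rw [norm_norm]
  exact_mod_cast hpow

theorem summable_pi_prod_of_nonneg {ι κ : Type*} [Fintype ι] {f : ι → κ → ℝ}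
    (hf0 : ∀ i a, 0 ≤ f i a) (hf : ∀ i, Summable (f i)) :
    Summable fun d : ι → κ ↦ ∏ i, f i (d i) := by
  classical
  refine summable_of_sum_le (c := ∏ i, ∑' a, f i a)
    (fun d ↦ Finset.prod_nonneg fun i _ ↦ hf0 i (d i)) fun s ↦ ?_
  have hs : s ⊆ Fintype.piFinset fun i ↦ s.image (· i) := fun d hd ↦
    Fintype.mem_piFinset.mpr fun i ↦ Finset.mem_image_of_mem (· i) hd
  calc ∑ d ∈ s, ∏ i, f i (d i)
      ≤ ∑ d ∈ Fintype.piFinset fun i ↦ s.image (· i), ∏ i, f i (d i) :=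
        Finset.sum_le_sum_of_subset_of_nonneg hs fun d _ _ ↦
          Finset.prod_nonneg fun i _ ↦ hf0 i (d i)
    _ = ∏ i, ∑ a ∈ s.image (· i), f i a := (Finset.prod_univ_sum _ _).symm
    _ ≤ ∏ i, ∑' a, f i a := Finset.prod_le_prod
        (fun i _ ↦ Finset.sum_nonneg fun a _ ↦ hf0 i a)
        fun i _ ↦ (hf i).sum_le_tsum _ fun a _ ↦ hf0 i a

theorem sum_comp_le_tsum_of_injective {ι κ : Type*} {f : κ → ℝ} (hf0 : ∀ a, 0 ≤ f a)
    (hf : Summable f) {e : ι → κ} (he : e.Injective) (s : Finset ι) :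
    ∑ i ∈ s, f (e i) ≤ ∑' a, f a :=
  ((hf.comp_injective he).sum_le_tsum s fun i _ ↦ hf0 (e i)).trans
    (tsum_comp_le_tsum_of_inj hf hf0 he)

end Summability

section UpperBound

/-- The weight `d ↦ ∏ i, ‖X i ^ |d i|‖` on `ℤ^k`, which dominates the entries of the Poisson kernels
of `X` along the diagonals `α - β = d`. -/
def diagonalWeight {ι R : Type*} [Fintype ι] [SeminormedRing R] (X : ι → R) (d : ι → ℤ) : ℝ :=
  ∏ i, ‖X i ^ (d i).natAbs‖

theorem diagonalWeight_nonneg {ι R : Type*} [Fintype ι] [SeminormedRing R] (X : ι → R) (d : ι → ℤ) :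
    0 ≤ diagonalWeight X d :=
  Finset.prod_nonneg fun _ _ ↦ norm_nonneg _

theorem summable_diagonalWeight {ι A : Type*} [Fintype ι] [NormedRing A] [NormedAlgebra ℂ A]
    [CompleteSpace A] {X : ι → A} (hX : ∀ i, spectralRadius ℂ (X i) < 1) :
    Summable (diagonalWeight X) := by
  refine summable_pi_prod_of_nonneg (f := fun i (d : ℤ) ↦ ‖X i ^ d.natAbs‖)
    (fun _ _ ↦ norm_nonneg _) fun i ↦ ?_
  have hi := summable_norm_pow_of_spectralRadius_lt_one (hX i)
  exact .of_nat_of_neg (by simpa using hi) (by simpa using hi)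

theorem norm_pow_sub_mul_norm_pow_sub {R : Type*} [SeminormedRing R] [NormOneClass R] (a : R)
    (m n : ℕ) : ‖a ^ (n - m)‖ * ‖a ^ (m - n)‖ = ‖a ^ ((m : ℤ) - n).natAbs‖ := by
  rcases le_total n m with hle | hle
  · rw [Nat.sub_eq_zero_of_le hle, pow_zero, norm_one, one_mul]
    congr 2
    lia
  · rw [Nat.sub_eq_zero_of_le hle, pow_zero, norm_one, mul_one]
    congr 2
    lia

namespace IsPoissonKernel

variable {X : Fin k → (H →L[ℂ] H)} {r : ℝ} {P : L2 k H →L[ℂ] L2 k H}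

theorem norm_inner_single_le (hP : IsPoissonKernel X r P) (hr : r ∈ Set.Ico (0 : ℝ) 1)
    (α β : Fin k → ℕ) (x y : H) :
    ‖inner ℂ (P (lp.single 2 β x)) (lp.single 2 α y)‖ ≤
      diagonalWeight X (fun i ↦ (α i : ℤ) - β i) * (‖x‖ * ‖y‖) := by
  cases subsingleton_or_nontrivial H
  · simp [Subsingleton.elim x 0]
  have hadj (i : Fin k) (m : ℕ) : ‖adjoint (X i) ^ m‖ = ‖X i ^ m‖ := by
    rw [← star_eq_adjoint, ← star_pow, norm_star]
  have hop : ‖(List.ofFn fun i ↦ X i ^ (β i - α i)).prod *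
      (List.ofFn fun i ↦ adjoint (X i) ^ (α i - β i)).prod‖ ≤
      diagonalWeight X (fun i ↦ (α i : ℤ) - β i) := by
    refine (norm_mul_le_of_le (norm_prod_ofFn_le _) (norm_prod_ofFn_le _)).trans_eq ?_
    simp only [hadj, diagonalWeight, ← norm_pow_sub_mul_norm_pow_sub, Finset.prod_mul_distrib]
  rw [hP, norm_mul, Complex.norm_real, Real.norm_of_nonneg (pow_nonneg hr.1 _), ← mul_assoc]
  refine (mul_le_of_le_one_left (norm_nonneg _) (pow_le_one₀ hr.1 hr.2.le)).trans ?_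
  exact (norm_inner_le_norm _ _).trans (by gcongr; exact le_of_opNorm_le _ hop x)

theorem isSelfAdjoint (hP : IsPoissonKernel X r P) (hX : ∀ i j, Commute (X i) (X j)) :
    IsSelfAdjoint P := by
  have hadj (a : Fin k → ℕ) : (List.ofFn fun i ↦ adjoint (X i) ^ a i).prod =
      adjoint (List.ofFn fun i ↦ X i ^ a i).prod := by
    simp only [← star_eq_adjoint, star_pow,
      star_prod_ofFn_of_commute fun i j ↦ (hX i j).pow_pow (a i) (a j)]
  refine eq_of_forall_inner_single_eq (𝕜 := ℂ) fun α β x y ↦ ?_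
  rw [star_eq_adjoint, adjoint_inner_left, ← inner_conj_symm, hP, hP, map_mul, Complex.conj_ofReal,
    inner_conj_symm]
  simp only [hadj, mul_apply_eq_comp, add_comm]
  rw [← adjoint_inner_left, adjoint_inner_right]

theorem norm_le_tsum_diagonalWeight (hP : IsPoissonKernel X r P) (hr : r ∈ Set.Ico (0 : ℝ) 1)
    (hX : Summable (diagonalWeight X)) : ‖P‖ ≤ ∑' d, diagonalWeight X d := by
  have hinj_left (β : Fin k → ℕ) : Function.Injective fun (α : Fin k → ℕ) i ↦ (α i : ℤ) - β i :=
    fun α α' h ↦ funext fun i ↦ by simpa using congrFun h i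
  have hinj_right (α : Fin k → ℕ) : Function.Injective fun (β : Fin k → ℕ) i ↦ (α i : ℤ) - β i :=
    fun β β' h ↦ funext fun i ↦ by simpa using congrFun h i
  have hX0 := diagonalWeight_nonneg X
  exact opNorm_le_of_norm_inner_single_le (fun β α ↦ hX0 fun i ↦ (α i : ℤ) - β i) (tsum_nonneg hX0)
    (fun β ↦ sum_comp_le_tsum_of_injective hX0 hX (hinj_left β))
    (fun α ↦ sum_comp_le_tsum_of_injective hX0 hX (hinj_right α))
    fun β α ↦ hP.norm_inner_single_le hr α β

end IsPoissonKernel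

theorem opLE_smul_one_of_isSelfAdjoint {E : Type*} [NormedAddCommGroup E] [InnerProductSpace ℂ E]
    [CompleteSpace E] {T : E →L[ℂ] E} (hT : IsSelfAdjoint T) {C : ℝ} (hC : ‖T‖ ≤ C) :
    opLE T ((C : ℂ) • 1) := by
  have hle : T ≤ algebraMap ℝ (E →L[ℂ] E) C :=
    hT.le_algebraMap_norm_self.trans (algebraMap_mono _ hC)
  rwa [Algebra.algebraMap_eq_smul_one, ContinuousLinearMap.le_def, ← Complex.coe_smul] at hle

end UpperBound

theorem stmt_8_general {X : Fin k → (H →L[ℂ] H)} (hX : ∀ i j, Commute (X i) (X j))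
    {P : ℝ → (L2 k H →L[ℂ] L2 k H)}
    (hP : ∀ r ∈ Set.Ico (0 : ℝ) 1, IsPoissonKernel X r (P r)) :
    (∃ c : ℝ, 0 < c ∧ ∀ r ∈ Set.Ico (0 : ℝ) 1,
        opLE (P r) (((c : ℂ) ^ 2) • (1 : L2 k H →L[ℂ] L2 k H))) ↔
      ∀ i, spectralRadius ℂ (X i) < 1 := by
  refine ⟨fun ⟨c, _, hc⟩ ↦ spectralRadius_lt_one_of_forall_opLE hP (C := c ^ 2)
    (by simpa only [Complex.ofReal_pow] using hc), fun hρ ↦ ?_⟩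
  have hX0 : 0 ≤ ∑' d, diagonalWeight X d := tsum_nonneg (diagonalWeight_nonneg X)
  refine ⟨√((∑' d, diagonalWeight X d) + 1), by positivity, fun r hr ↦ ?_⟩
  rw [← Complex.ofReal_pow, Real.sq_sqrt (by positivity)]
  refine opLE_smul_one_of_isSelfAdjoint ((hP r hr).isSelfAdjoint hX) ?_
  linarith [(hP r hr).norm_le_tsum_diagonalWeight hr (summable_diagonalWeight hρ)]

/-- For `X ∈ D^k(H)⁻`, there is `c > 0` with `𝒫(R, rX) ≤ c² I` for all
`r ∈ [0,1)` iff the spectral radius of each `X_i` is strictly less than `1`. -/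
theorem stmt_8 (hk : 1 ≤ k) (X : Fin k → (H →L[ℂ] H)) (hX : memClosedPolydisk X)
    (P : ℝ → (L2 k H →L[ℂ] L2 k H))
    (hP : ∀ r ∈ Set.Ico (0 : ℝ) 1, IsPoissonKernel X r (P r)) :
    (∃ c : ℝ, 0 < c ∧ ∀ r ∈ Set.Ico (0 : ℝ) 1,
        opLE (P r) (((c : ℂ) ^ 2) • (1 : L2 k H →L[ℂ] L2 k H))) ↔
      ∀ i, spectralRadius ℂ (X i) < 1 :=
  stmt_8_general hX.1 hP

end
end

section
/- Let X = (X_1,…,X_k) ∈ D^k(H)^-. The following are equivalent: (i) the spectral radius of X_i is strictly less than 1 for every i, and there exists a > 0 such that 𝒫(R, rX) ≥ a·I for all r ∈ [0,1); (ii) X ∈ D^k(H), i.e., ‖X_i‖ < 1 for all i and Δ_X(I) is positive and invertible; (iii) there exists c ≥ 1 such that c^{-2}·I ≤ 𝒫(R, rX) ≤ c²·I for all r ∈ [0,1). -/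
open ContinuousLinearMap

noncomputable section

variable {k : ℕ} {H : Type*} [NormedAddCommGroup H] [InnerProductSpace ℂ H] [CompleteSpace H]

/-!
Write `S_i` for the shift `δ_α ↦ δ_{α + e_i}` and `S = ∏ i, (I - S_i* ⊗ T_i)`. Conjugation by the
`i`-th factor turns the one-variable Toeplitz factor `z ^ (b - a)⁺ * (z*) ^ (a - b)⁺` of the matrix
of `𝒫(R, T)` into a diagonal one with entries `1 - z z*`, so that `S 𝒫(R, T) S* = I ⊗ Δ_T(I)`. If
`‖T_i‖ ≤ ρ < 1` then `‖S‖ ≤ 2ⁿ` and `‖S⁻¹‖ ≤ (1 - ρ)⁻ⁿ`, so two-sided scalar bounds on `Δ_T(I)`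
give two-sided bounds on `𝒫(R, T)` that depend only on `ρ`. Conversely each factor fixes `δ_0 h`,
so `F = δ_0* S` satisfies `F δ_0 = 1`; hence `a I ≤ 𝒫(R, T)` gives `a I ≤ F 𝒫(R, T) F* = Δ_T(I)`
and, with the single factor `i` in place of `S`, `a I ≤ I - T_i T_i*`. Both estimates are applied
to `T = rX`, using `Δ_X(I) ≤ Δ_{rX}(I) ≤ I` in one direction and `r → 1` in the other.
-/

section CStarAlgebra

variable {A : Type*} [CStarAlgebra A] [PartialOrder A] [StarOrderedRing A]

theorem isStrictlyPositive_iff_exists_algebraMap_le {a : A} :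
    IsStrictlyPositive a ↔ ∃ ε : ℝ, 0 < ε ∧ algebraMap ℝ A ε ≤ a := by
  refine ⟨fun ha => ?_, fun ⟨ε, hε, h⟩ => (isStrictlyPositive_algebraMap hε).of_le h⟩
  rcases subsingleton_or_nontrivial A with _ | _
  · exact ⟨1, one_pos, (Subsingleton.elim _ _).le⟩
  exact (CFC.exists_pos_algebraMap_le_iff ha.isSelfAdjoint).mpr fun x hx => ha.spectrum_pos hx

theorem star_right_conjugate_algebraMap_le {b C : ℝ} (hb : 0 ≤ b) {u : A} (hu : ‖u‖ ≤ C) :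
    u * algebraMap ℝ A b * star u ≤ algebraMap ℝ A (b * C ^ 2) := by
  rw [← Algebra.commutes, mul_assoc, ← Algebra.smul_def, map_mul, ← Algebra.smul_def]
  refine smul_le_smul_of_nonneg_left ?_ hb
  exact CStarAlgebra.mul_star_le_algebraMap_norm_sq.trans (algebraMap_mono A (by gcongr))

theorem le_algebraMap_of_star_right_conjugate_le {u : Aˣ} {p : A} {b c C : ℝ} (hb : 0 ≤ b)
    (hu : ‖(↑u⁻¹ : A)‖ ≤ C) (hbc : b * C ^ 2 ≤ c) (h : u * p * star (u : A) ≤ algebraMap ℝ A b) :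
    p ≤ algebraMap ℝ A c :=
  calc p = ↑u⁻¹ * (u * p * star (u : A)) * star (↑u⁻¹ : A) := by
        have hstar : star (u : A) * star (↑u⁻¹ : A) = 1 := by rw [← star_mul, u.inv_mul, star_one]
        rw [mul_assoc, mul_assoc, hstar, mul_one, u.inv_mul_cancel_left]
    _ ≤ ↑u⁻¹ * algebraMap ℝ A b * star (↑u⁻¹ : A) := star_right_conjugate_le_conjugate h _
    _ ≤ algebraMap ℝ A (b * C ^ 2) := star_right_conjugate_algebraMap_le hb hu
    _ ≤ algebraMap ℝ A c := algebraMap_mono A hbc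

theorem algebraMap_le_of_le_star_right_conjugate {u : Aˣ} {p : A} {b c C : ℝ} (hc : 0 ≤ c)
    (hu : ‖(u : A)‖ ≤ C) (hcb : c * C ^ 2 ≤ b) (h : algebraMap ℝ A b ≤ u * p * star (u : A)) :
    algebraMap ℝ A c ≤ p := by
  rw [← sub_nonneg, ← u.isUnit.star_right_conjugate_nonneg_iff, mul_sub, sub_mul, sub_nonneg]
  exact (star_right_conjugate_algebraMap_le hc hu).trans ((algebraMap_mono A hcb).trans h)

theorem norm_lt_one_of_algebraMap_le_one_sub_mul_star {a : ℝ} (ha : 0 < a) {y : A}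
    (h : algebraMap ℝ A a ≤ 1 - y * star y) : ‖y‖ < 1 := by
  have hy : y * star y ≤ algebraMap ℝ A (1 - a) := by
    rw [map_sub, map_one]; exact le_sub_comm.mp h
  have hnorm : ‖y * star y‖ ≤ max (1 - a) 0 :=
    (CStarAlgebra.norm_le_iff_le_algebraMap _ (le_max_right _ _) (mul_star_self_nonneg y)).mpr
      (hy.trans (algebraMap_mono A (le_max_left _ _)))
  rw [CStarRing.norm_self_mul_star] at hnorm
  have hlt : ‖y‖ * ‖y‖ < 1 := hnorm.trans_lt (max_lt (by linarith) one_pos)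
  nlinarith [norm_nonneg y]

-- Iterating the hypothesis gives `x ^ n * z * star (x ^ n) ≤ z`, and the left side tends to `0`.
theorem nonneg_of_mul_mul_star_le {x z : A} (hx : ‖x‖ < 1) (h : x * z * star x ≤ z) : 0 ≤ z := by
  have hle (n : ℕ) : x ^ n * z * star (x ^ n) ≤ z := by
    induction n with
    | zero => simp
    | succ n ih =>
      calc x ^ (n + 1) * z * star (x ^ (n + 1))
          = x ^ n * (x * z * star x) * star (x ^ n) := by simp only [pow_succ, star_mul, mul_assoc]
        _ ≤ x ^ n * z * star (x ^ n) := star_right_conjugate_le_conjugate h _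
        _ ≤ z := ih
  have hpow : Filter.Tendsto (fun n => x ^ n) Filter.atTop (nhds 0) :=
    tendsto_pow_atTop_nhds_zero_of_norm_lt_one hx
  have hlim : Filter.Tendsto (fun n => x ^ n * z * star (x ^ n)) Filter.atTop (nhds 0) := by
    simpa using (hpow.mul_const z).mul hpow.star
  exact le_of_tendsto' hlim hle

end CStarAlgebra

theorem le_of_forall_Ico_le_of_continuous {A : Type*} [TopologicalSpace A] [Preorder A]
    [ClosedIciTopology A] {a b : ℝ} (hab : a < b) {f : ℝ → A} (hf : Continuous f) {x : A}
    (h : ∀ r ∈ Set.Ico a b, x ≤ f r) : x ≤ f b :=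
  ge_of_tendsto ((hf.tendsto b).mono_left nhdsWithin_le_nhds)
    (Filter.mem_of_superset (Ico_mem_nhdsLT hab) h)

theorem exists_one_le_inv_sq_le_and_le_sq {a : ℝ} (ha : 0 < a) (b : ℝ) :
    ∃ c : ℝ, 1 ≤ c ∧ (c ^ 2)⁻¹ ≤ a ∧ b ≤ c ^ 2 := by
  let c := max 1 (max a⁻¹ b)
  have hc : 1 ≤ c := le_max_left _ _
  have hmax : max a⁻¹ b ≤ c ^ 2 := (le_max_right _ _).trans (le_self_pow₀ hc two_ne_zero)
  exact ⟨c, hc, inv_le_of_inv_le₀ ha ((le_max_left _ _).trans hmax),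
    (le_max_right _ _).trans hmax⟩

section NormedRing

variable {R : Type*} [NormedRing R] [HasSummableGeomSeries R]

theorem exists_unit_eq_one_sub (hone : ‖(1 : R)‖ ≤ 1) {w : R} {ρ : ℝ} (hw : ‖w‖ ≤ ρ)
    (hρ : ρ < 1) : ∃ u : Rˣ, (u : R) = 1 - w ∧ ‖(u : R)‖ ≤ 2 ∧ ‖(↑u⁻¹ : R)‖ ≤ (1 - ρ)⁻¹ := by
  have hw1 := hw.trans_lt hρ
  refine ⟨Units.oneSub w hw1, rfl, ?_, ?_⟩
  · exact (norm_sub_le 1 w).trans (by linarith)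
  · calc ‖(↑(Units.oneSub w hw1)⁻¹ : R)‖ ≤ ‖(1 : R)‖ - 1 + (1 - ‖w‖)⁻¹ :=
        tsum_geometric_le_of_norm_lt_one w hw1
      _ ≤ (1 - ‖w‖)⁻¹ := by linarith
      _ ≤ (1 - ρ)⁻¹ := by gcongr

theorem exists_unit_eq_prod_map_one_sub (hone : ‖(1 : R)‖ ≤ 1) {ι : Type*} (l : List ι)
    {w : ι → R} {ρ : ℝ} (hw : ∀ i, ‖w i‖ ≤ ρ) (hρ : ρ < 1) :
    ∃ u : Rˣ, (u : R) = (l.map fun i => 1 - w i).prod ∧ ‖(u : R)‖ ≤ 2 ^ l.length ∧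
      ‖(↑u⁻¹ : R)‖ ≤ (1 - ρ)⁻¹ ^ l.length := by
  induction l with
  | nil => exact ⟨1, by simp [hone]⟩
  | cons i l ih =>
    obtain ⟨v, hv, hv2, hv_inv⟩ := exists_unit_eq_one_sub hone (hw i) hρ
    obtain ⟨u, hu, hu2, hu_inv⟩ := ih
    refine ⟨v * u, by simp [hv, hu], ?_, ?_⟩
    · rw [Units.val_mul, List.length_cons, pow_succ']
      exact (norm_mul_le _ _).trans (by gcongr)
    · rw [mul_inv_rev, Units.val_mul, List.length_cons, pow_succ]
      exact (norm_mul_le _ _).trans (by gcongr)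

end NormedRing

theorem spectralRadius_lt_one_of_norm_lt_one {𝕜 A : Type*} [NormedField 𝕜] [NormedRing A]
    [NormedAlgebra 𝕜 A] [CompleteSpace A] (hone : ‖(1 : A)‖ ≤ 1) {x : A} (hx : ‖x‖ < 1) :
    spectralRadius 𝕜 x < 1 := by
  have hle : spectralRadius 𝕜 x ≤ ‖x‖₊ * ‖(1 : A)‖₊ := by
    simpa using spectrum.spectralRadius_le_pow_nnnorm_pow_one_div 𝕜 x 0
  refine hle.trans_lt ?_
  exact_mod_cast mul_lt_one_of_nonneg_of_lt_one_left (norm_nonneg x) hx hone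

section ToeplitzSymbol

variable {R : Type*} [CommRing R] {ι : Type*} [Fintype ι] [DecidableEq ι]

/-- The Toeplitz kernel `(a, b) ↦ z ^ (b - a)⁺ w ^ (a - b)⁺` on `ℕ × ℕ`: the matrix of the
one-variable Poisson kernel with `w` in the role of `z*`. Truncated subtraction in `ℕ` is the
positive part. -/
def toeplitzKernel (z w : R) (a b : ℕ) : R :=
  z ^ (b - a) * w ^ (a - b)

/-- The matrix of `(1 - B) K (1 - B)*` for a kernel `K` on `ℕ × ℕ` and `B` the backward shift
weighted by `z`, with `w` in the role of `z*`. -/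
def kernelDefect (z w : R) (K : ℕ → ℕ → R) (a b : ℕ) : R :=
  K a b - z * K (a + 1) b - w * K a (b + 1) + z * w * K (a + 1) (b + 1)

theorem kernelDefect_toeplitzKernel (z w : R) (a b : ℕ) :
    kernelDefect z w (toeplitzKernel z w) a b = if a = b then 1 - z * w else 0 := by
  unfold kernelDefect toeplitzKernel
  rcases lt_trichotomy a b with h | rfl | h
  · obtain ⟨d, rfl⟩ := Nat.exists_eq_add_of_lt h
    rw [if_neg (by lia), show a + d + 1 - a = d + 1 by lia, show a - (a + d + 1) = 0 by lia,
      show a + d + 1 - (a + 1) = d by lia, show a + 1 - (a + d + 1) = 0 by lia,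
      show a + d + 1 + 1 - a = d + 2 by lia, show a - (a + d + 1 + 1) = 0 by lia,
      show a + d + 1 + 1 - (a + 1) = d + 1 by lia, show a + 1 - (a + d + 1 + 1) = 0 by lia]
    ring
  · simp only [tsub_self, add_tsub_cancel_left, pow_zero, pow_one, mul_one, if_true,
      show a - (a + 1) = 0 by lia]
    ring
  · obtain ⟨d, rfl⟩ := Nat.exists_eq_add_of_lt h
    rw [if_neg (by lia), show b + d + 1 - b = d + 1 by lia, show b - (b + d + 1) = 0 by lia,
      show b + d + 1 - (b + 1) = d by lia, show b + 1 - (b + d + 1) = 0 by lia,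
      show b + d + 1 + 1 - b = d + 2 by lia, show b - (b + d + 1 + 1) = 0 by lia,
      show b + d + 1 + 1 - (b + 1) = d + 1 by lia, show b + 1 - (b + d + 1 + 1) = 0 by lia]
    ring

theorem prod_kernel_add_single (K : ι → ℕ → ℕ → R) (i : ι) (α β : ι → ℕ) (a b : ℕ) :
    ∏ j, K j (α j + (Pi.single i a : ι → ℕ) j) (β j + (Pi.single i b : ι → ℕ) j) =
      K i (α i + a) (β i + b) * ∏ j ∈ Finset.univ.erase i, K j (α j) (β j) := by
  rw [← Finset.mul_prod_erase _ _ (Finset.mem_univ i), Pi.single_eq_same, Pi.single_eq_same]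
  congr 1
  refine Finset.prod_congr rfl fun j hj => ?_
  have hji := Finset.ne_of_mem_erase hj
  rw [Pi.single_eq_of_ne hji, Pi.single_eq_of_ne hji, add_zero, add_zero]

theorem prod_update_kernelDefect (z w : R) (K : ι → ℕ → ℕ → R) (i : ι) (α β : ι → ℕ) :
    ∏ j, Function.update K i (kernelDefect z w (K i)) j (α j) (β j) =
      ∏ j, K j (α j) (β j) - z * ∏ j, K j ((α + Pi.single i 1 : ι → ℕ) j) (β j)
        - w * ∏ j, K j (α j) ((β + Pi.single i 1 : ι → ℕ) j)
        + z * (w * ∏ j, K j ((α + Pi.single i 1 : ι → ℕ) j) ((β + Pi.single i 1 : ι → ℕ) j)) := by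
  have h00 := prod_kernel_add_single K i α β 0 0
  have h01 := prod_kernel_add_single K i α β 0 1
  have h10 := prod_kernel_add_single K i α β 1 0
  have hupd := prod_kernel_add_single (Function.update K i (kernelDefect z w (K i))) i α β 0 0
  have hrest : ∏ j ∈ Finset.univ.erase i,
      Function.update K i (kernelDefect z w (K i)) j (α j) (β j) =
      ∏ j ∈ Finset.univ.erase i, K j (α j) (β j) :=
    Finset.prod_congr rfl fun j hj => by rw [Function.update_of_ne (Finset.ne_of_mem_erase hj)]
  simp only [Pi.single_zero, Pi.zero_apply, add_zero, Function.update_self] at h00 h01 h10 hupd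
  simp only [Pi.add_apply]
  rw [hupd, hrest, h00, h01, h10, prod_kernel_add_single K i α β 1 1, kernelDefect]
  ring

/-- The kernel on `(ι → ℕ) × (ι → ℕ)` obtained from the product of the Toeplitz kernels in the
variables `z i, w i` by applying `kernelDefect` in the directions `i ∈ s`. -/
def toeplitzSymbol (z w : ι → R) (s : Finset ι) (α β : ι → ℕ) : R :=
  ∏ i, s.piecewise (fun i => kernelDefect (z i) (w i) (toeplitzKernel (z i) (w i)))
    (fun i => toeplitzKernel (z i) (w i)) i (α i) (β i)

theorem toeplitzSymbol_insert (z w : ι → R) {s : Finset ι} {i : ι} (hi : i ∉ s) (α β : ι → ℕ) :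
    toeplitzSymbol z w (insert i s) α β =
      toeplitzSymbol z w s α β - z i * toeplitzSymbol z w s (α + Pi.single i 1) β
        - w i * toeplitzSymbol z w s α (β + Pi.single i 1)
        + z i * (w i * toeplitzSymbol z w s (α + Pi.single i 1) (β + Pi.single i 1)) := by
  have hupd := prod_update_kernelDefect (z i) (w i) (s.piecewise
    (fun i => kernelDefect (z i) (w i) (toeplitzKernel (z i) (w i)))
    (fun i => toeplitzKernel (z i) (w i))) i α β
  rwa [s.piecewise_eq_of_notMem _ _ hi, ← Finset.piecewise_insert] at hupd

theorem toeplitzSymbol_empty (z w : ι → R) (α β : ι → ℕ) :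
    toeplitzSymbol z w ∅ α β = (∏ i, z i ^ (β i - α i)) * ∏ i, w i ^ (α i - β i) := by
  simp [toeplitzSymbol, toeplitzKernel, Finset.prod_mul_distrib]

theorem toeplitzSymbol_univ (z w : ι → R) (α β : ι → ℕ) :
    toeplitzSymbol z w Finset.univ α β = if α = β then ∏ i, (1 - z i * w i) else 0 := by
  simp only [toeplitzSymbol, Finset.piecewise_univ, kernelDefect_toeplitzKernel]
  split_ifs with h
  · simp [h]
  · obtain ⟨i, hi⟩ := Function.ne_iff.mp h
    exact Finset.prod_eq_zero (Finset.mem_univ i) (if_neg hi)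

theorem toeplitzSymbol_singleton_self (z w : ι → R) (i : ι) (α : ι → ℕ) :
    toeplitzSymbol z w {i} α α = 1 - z i * w i := by
  rw [toeplitzSymbol, Finset.prod_eq_single i]
  · simp [kernelDefect_toeplitzKernel]
  · intro j _ hj
    simp [hj, toeplitzKernel]
  · simp

end ToeplitzSymbol

section Hereditary

open MvPolynomial

theorem prod_ofFn_pow_add_single {M : Type*} [Monoid M] {n : ℕ} {a : Fin n → M}
    (ha : ∀ i j, Commute (a i) (a j)) (i : Fin n) (m : Fin n → ℕ) :
    (List.ofFn fun j => a j ^ (Pi.single i 1 + m : Fin n → ℕ) j).prod =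
      a i * (List.ofFn fun j => a j ^ m j).prod := by
  induction n with
  | zero => exact i.elim0
  | succ n ih =>
    rw [List.ofFn_succ, List.ofFn_succ, List.prod_cons, List.prod_cons]
    rcases Fin.eq_zero_or_eq_succ i with rfl | ⟨i, rfl⟩
    · simp [pow_add, mul_assoc]
    · have htail := ih (fun i j => ha i.succ j.succ) i fun j => m j.succ
      simp only [Pi.add_apply, Pi.single_apply, Fin.succ_inj, (Fin.succ_ne_zero i).symm,
        if_false, zero_add] at htail ⊢
      rw [htail, ← mul_assoc, ← ((ha i.succ 0).pow_right (m 0)).eq, mul_assoc]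

variable {A : Type*} {n : ℕ}

/-- The hereditary functional calculus of a tuple `a`: `p(z, w)` is sent to `p(a, a*)` with every
adjoint to the right of every `a i`. The variables `z i` and `w i` are `X (.inl i)` and
`X (.inr i)`. -/
def hereditary [Ring A] [StarRing A] [Algebra ℝ A] (a : Fin n → A) :
    MvPolynomial (Fin n ⊕ Fin n) ℝ →ₗ[ℝ] A :=
  (basisMonomials (Fin n ⊕ Fin n) ℝ).constr ℝ fun m =>
    (List.ofFn fun i => a i ^ m (.inl i)).prod * (List.ofFn fun i => star (a i) ^ m (.inr i)).prod

namespace hereditary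

section Ring

variable [Ring A] [StarRing A] [Algebra ℝ A] (a : Fin n → A)

theorem monomial_one (m : Fin n ⊕ Fin n →₀ ℕ) :
    hereditary a (monomial m 1) = (List.ofFn fun i => a i ^ m (.inl i)).prod *
      (List.ofFn fun i => star (a i) ^ m (.inr i)).prod := by
  have h := (basisMonomials (Fin n ⊕ Fin n) ℝ).constr_basis ℝ (fun m =>
    (List.ofFn fun i => a i ^ m (.inl i)).prod *
      (List.ofFn fun i => star (a i) ^ m (.inr i)).prod) m
  rwa [coe_basisMonomials] at h

theorem map_one : hereditary a 1 = 1 := by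
  simpa [List.prod_eq_one] using monomial_one a 0

theorem prod_pow_mul_prod_pow (p q : Fin n → ℕ) :
    hereditary a ((∏ i, X (.inl i) ^ p i) * ∏ i, X (.inr i) ^ q i) =
      (List.ofFn fun i => a i ^ p i).prod * (List.ofFn fun i => star (a i) ^ q i).prod := by
  have hmon : (∏ i, X (.inl i) ^ p i) * ∏ i, X (.inr i) ^ q i =
      monomial (R := ℝ) (Finsupp.equivFunOnFinite.symm (Sum.elim p q)) 1 := by
    rw [monomial_eq, Finsupp.prod_fintype _ _ (by simp), Fintype.prod_sum_type]
    simp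
  rw [hmon, monomial_one]
  simp

variable {a}

theorem X_inl_mul (ha : ∀ i j, Commute (a i) (a j)) (i : Fin n)
    (p : MvPolynomial (Fin n ⊕ Fin n) ℝ) :
    hereditary a (X (.inl i) * p) = a i * hereditary a p := by
  suffices hereditary a ∘ₗ LinearMap.mulLeft ℝ (X (.inl i)) =
      LinearMap.mulLeft ℝ (a i) ∘ₗ hereditary a from LinearMap.congr_fun this p
  refine (basisMonomials _ ℝ).ext fun m => ?_
  simp only [coe_basisMonomials, LinearMap.comp_apply, LinearMap.mulLeft_apply, X, monomial_mul,
    one_mul, monomial_one, ← mul_assoc]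
  rw [← prod_ofFn_pow_add_single ha]
  simp [Finsupp.single_apply, Pi.single_apply, eq_comm]

theorem X_inr_mul (ha : ∀ i j, Commute (a i) (a j)) (i : Fin n)
    (p : MvPolynomial (Fin n ⊕ Fin n) ℝ) :
    hereditary a (X (.inr i) * p) = hereditary a p * star (a i) := by
  have ha_star (i j) : Commute (star (a i)) (star (a j)) := (ha i j).star_star
  suffices hereditary a ∘ₗ LinearMap.mulLeft ℝ (X (.inr i)) =
      LinearMap.mulRight ℝ (star (a i)) ∘ₗ hereditary a from LinearMap.congr_fun this p
  refine (basisMonomials _ ℝ).ext fun m => ?_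
  have hcomm : Commute (star (a i)) (List.ofFn fun j => star (a j) ^ m (.inr j)).prod := by
    refine Commute.list_prod_right _ _ fun x hx => ?_
    obtain ⟨j, rfl⟩ := List.mem_ofFn.mp hx
    exact (ha_star i j).pow_right _
  simp only [coe_basisMonomials, LinearMap.comp_apply, LinearMap.mulLeft_apply,
    LinearMap.mulRight_apply, X, monomial_mul, one_mul, monomial_one, mul_assoc]
  rw [← hcomm.eq, ← prod_ofFn_pow_add_single ha_star]
  simp [Finsupp.single_apply, Pi.single_apply, eq_comm]

theorem one_sub_mul (ha : ∀ i j, Commute (a i) (a j)) (t : ℝ) (i : Fin n)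
    (p : MvPolynomial (Fin n ⊕ Fin n) ℝ) :
    hereditary a ((1 - C t * (X (.inl i) * X (.inr i))) * p) =
      hereditary a p - t • (a i * hereditary a p * star (a i)) := by
  rw [sub_mul, one_mul, map_sub, mul_assoc, C_mul', map_smul, mul_assoc, X_inl_mul ha,
    X_inr_mul ha, mul_assoc]

end Ring

section CStarAlgebra

variable [CStarAlgebra A] [PartialOrder A] [StarOrderedRing A] {a : Fin n → A}

theorem nonneg_of_nonneg_one_sub_mul (ha : ∀ i j, Commute (a i) (a j)) {i : Fin n}
    (hai : ‖a i‖ < 1) {p : MvPolynomial (Fin n ⊕ Fin n) ℝ}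
    (hp : 0 ≤ hereditary a ((1 - X (.inl i) * X (.inr i)) * p)) : 0 ≤ hereditary a p := by
  have h := one_sub_mul ha 1 i p
  rw [C_1, one_mul, one_smul] at h
  exact nonneg_of_mul_mul_star_le hai (sub_nonneg.mp (h ▸ hp))

-- One factor is relaxed at a time: positivity of the product with the remaining factors is
-- what makes subtracting only the fraction `t` of `a i * _ * star (a i)` an increase.
theorem prod_one_sub_le (ha : ∀ i j, Commute (a i) (a j)) (ha1 : ∀ i, ‖a i‖ < 1) {t : ℝ}
    (ht : t ≤ 1) (s : Finset (Fin n)) (p : MvPolynomial (Fin n ⊕ Fin n) ℝ)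
    (hp : 0 ≤ hereditary a ((∏ i ∈ s, (1 - X (.inl i) * X (.inr i))) * p)) :
    hereditary a ((∏ i ∈ s, (1 - X (.inl i) * X (.inr i))) * p) ≤
      hereditary a ((∏ i ∈ s, (1 - C t * (X (.inl i) * X (.inr i)))) * p) := by
  induction s using Finset.induction_on generalizing p with
  | empty => simp
  | insert i s hi ih =>
    set D := ∏ i ∈ s, (1 - X (.inl i) * X (.inr i) : MvPolynomial (Fin n ⊕ Fin n) ℝ)
    set Dt := ∏ i ∈ s, (1 - C t * (X (.inl i) * X (.inr i)) : MvPolynomial (Fin n ⊕ Fin n) ℝ)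
    simp only [Finset.prod_insert hi] at hp ⊢
    have hD : hereditary a ((1 - X (.inl i) * X (.inr i)) * D * p) ≤
        hereditary a ((1 - X (.inl i) * X (.inr i)) * (Dt * p)) := by
      have := ih ((1 - X (.inl i) * X (.inr i)) * p) (by convert hp using 2; ring)
      convert this using 2 <;> ring
    have hDt : 0 ≤ hereditary a (Dt * p) := nonneg_of_nonneg_one_sub_mul ha (ha1 i) (hp.trans hD)
    refine hD.trans ?_
    have h1 := one_sub_mul ha 1 i (Dt * p)
    rw [C_1, one_mul, one_smul] at h1
    rw [mul_assoc, h1, one_sub_mul ha, sub_le_sub_iff_left]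
    have hnn := star_right_conjugate_nonneg hDt (a i)
    simpa using smul_le_smul_of_nonneg_right ht hnn

end CStarAlgebra

end hereditary

end Hereditary

section Defect

open MvPolynomial

variable {n : ℕ} {T : Fin n → (H →L[ℂ] H)}

theorem defect_ofReal_smul (hT : ∀ i j, Commute (T i) (T j)) (r : ℝ) :
    defect (fun i => (r : ℂ) • T i) =
      hereditary T (∏ i, (1 - C (r ^ 2) * (X (.inl i) * X (.inr i)))) := by
  have hfoldr (l : List (Fin n)) :
      (l.map fun i Y => Y - ((r : ℂ) • T i) * Y * adjoint ((r : ℂ) • T i)).foldr (· ∘ ·) id 1 =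
        hereditary T (l.map fun i => 1 - C (r ^ 2) * (X (.inl i) * X (.inr i))).prod := by
    induction l with
    | nil => simp [hereditary.map_one]
    | cons i l ih =>
      rw [List.map_cons, List.foldr_cons, Function.comp_apply, ih, List.map_cons, List.prod_cons,
        hereditary.one_sub_mul hT, ← star_eq_adjoint, star_smul, Complex.star_def,
        Complex.conj_ofReal]
      simp only [smul_mul_assoc, mul_smul_comm, smul_smul, ← sq, Complex.coe_smul]
  rw [defect, List.ofFn_eq_map, hfoldr, ← List.ofFn_eq_map, List.prod_ofFn]

theorem defect_eq_hereditary (hT : ∀ i j, Commute (T i) (T j)) :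
    defect T = hereditary T (∏ i, (1 - X (.inl i) * X (.inr i))) := by
  simpa using defect_ofReal_smul hT 1

theorem defect_zero : defect (fun _ : Fin n => (0 : H →L[ℂ] H)) = 1 := by
  have h := defect_ofReal_smul (T := fun _ : Fin n => (0 : H →L[ℂ] H)) (fun _ _ => .refl _) 0
  simpa [hereditary.map_one] using h

theorem defect_le_defect_ofReal_smul (hT : ∀ i j, Commute (T i) (T j)) (hT1 : ∀ i, ‖T i‖ < 1)
    (hdefect : 0 ≤ defect T) {r : ℝ} (hr : r ^ 2 ≤ 1) :
    defect T ≤ defect fun i => (r : ℂ) • T i := by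
  rw [defect_eq_hereditary hT] at hdefect ⊢
  rw [defect_ofReal_smul hT]
  simpa only [mul_one] using
    hereditary.prod_one_sub_le hT hT1 hr Finset.univ 1 (by simpa only [mul_one] using hdefect)

theorem defect_le_one (hT : ∀ i j, Commute (T i) (T j)) (hT1 : ∀ i, ‖T i‖ < 1)
    (hdefect : 0 ≤ defect T) : defect T ≤ 1 := by
  simpa [defect_zero] using
    defect_le_defect_ofReal_smul hT hT1 hdefect (r := 0) (by norm_num)

theorem continuous_defect : Continuous (defect : (Fin n → (H →L[ℂ] H)) → (H →L[ℂ] H)) := by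
  have hfoldr (l : List (Fin n)) : Continuous fun T : Fin n → (H →L[ℂ] H) =>
      (l.map fun i Y => Y - T i * Y * star (T i)).foldr (· ∘ ·) id 1 := by
    induction l with
    | nil => exact continuous_const
    | cons i l ih => exact ih.sub (((continuous_apply i).mul ih).mul (continuous_apply i).star)
  exact (hfoldr (List.finRange n)).congr fun T => by rw [defect, List.ofFn_eq_map]; rfl

end Defect

section LpOperators

variable {ι κ 𝕜 E F : Type*} [NontriviallyNormedField 𝕜] [NormedAddCommGroup E] [NormedSpace 𝕜 E]
  [NormedAddCommGroup F] [NormedSpace 𝕜 F]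

theorem sum_norm_apply_comp_rpow_le (σ : κ ↪ ι) (A : E →L[𝕜] F) (u : lp (fun _ : ι => E) 2)
    (s : Finset κ) :
    ∑ i ∈ s, ‖A (u (σ i))‖ ^ (2 : ENNReal).toReal ≤ (‖A‖ * ‖u‖) ^ (2 : ENNReal).toReal := by
  have hu := lp.sum_rpow_le_norm_rpow (by norm_num) u (s.map σ)
  simp only [Finset.sum_map, ENNReal.toReal_ofNat, Real.rpow_ofNat] at hu ⊢
  calc ∑ i ∈ s, ‖A (u (σ i))‖ ^ 2 ≤ ∑ i ∈ s, (‖A‖ * ‖u (σ i)‖) ^ 2 := by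
        gcongr; exact A.le_opNorm _
    _ = ‖A‖ ^ 2 * ∑ i ∈ s, ‖u (σ i)‖ ^ 2 := by simp only [mul_pow, Finset.mul_sum]
    _ ≤ (‖A‖ * ‖u‖) ^ 2 := by rw [mul_pow]; gcongr

/-- The operator `u ↦ A ∘ u ∘ σ` between `ℓ²` spaces. It specialises to `I ⊗ A` when `σ` is the
identity, and to a weighted backward shift when `σ` is a translation. -/
def weightedPullback (σ : κ ↪ ι) (A : E →L[𝕜] F) :
    lp (fun _ : ι => E) 2 →L[𝕜] lp (fun _ : κ => F) 2 :=
  LinearMap.mkContinuous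
    { toFun := fun u => ⟨fun i => A (u (σ i)), memℓp_gen' (sum_norm_apply_comp_rpow_le σ A u)⟩
      map_add' := fun u v => by ext i; exact map_add A _ _
      map_smul' := fun c u => by ext i; exact map_smul A _ _ }
    ‖A‖ fun u => lp.norm_le_of_forall_sum_le (by norm_num) (by positivity)
      (sum_norm_apply_comp_rpow_le σ A u)

theorem weightedPullback_apply (σ : κ ↪ ι) (A : E →L[𝕜] F) (u : lp (fun _ : ι => E) 2) (i : κ) :
    weightedPullback σ A u i = A (u (σ i)) :=
  rfl

theorem norm_weightedPullback_le (σ : κ ↪ ι) (A : E →L[𝕜] F) : ‖weightedPullback σ A‖ ≤ ‖A‖ :=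
  LinearMap.mkContinuous_norm_le _ (norm_nonneg _) _

variable [DecidableEq ι]

/-- The `(α, β)` entry of the operator matrix of `Q` with respect to `ℓ²(ι; E) = ⨁ E`. -/
def matrixEntry (Q : lp (fun _ : ι => E) 2 →L[𝕜] lp (fun _ : ι => E) 2) (α β : ι) : E →L[𝕜] E :=
  lp.evalCLM 𝕜 (fun _ : ι => E) 2 α ∘L Q ∘L lp.singleContinuousLinearMap 𝕜 (fun _ : ι => E) 2 β

theorem matrixEntry_apply (Q : lp (fun _ : ι => E) 2 →L[𝕜] lp (fun _ : ι => E) 2) (α β : ι)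
    (x : E) : matrixEntry Q α β x = Q (lp.single 2 β x) α :=
  rfl

theorem ext_matrixEntry {Q R : lp (fun _ : ι => E) 2 →L[𝕜] lp (fun _ : ι => E) 2}
    (h : ∀ α β, matrixEntry Q α β = matrixEntry R α β) : Q = R := by
  refine lp.ext_continuousLinearMap (by norm_num) fun β => ?_
  ext v α
  exact DFunLike.congr_fun (h α β) v

theorem matrixEntry_sub (Q R : lp (fun _ : ι => E) 2 →L[𝕜] lp (fun _ : ι => E) 2) (α β : ι) :
    matrixEntry (Q - R) α β = matrixEntry Q α β - matrixEntry R α β :=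
  rfl

end LpOperators

/-- The diagonal operator `I ⊗ A` on `ℓ²(ι; E)`. -/
def ampliation (ι E : Type*) [NormedAddCommGroup E] [InnerProductSpace ℂ E] [CompleteSpace E] :
    (E →L[ℂ] E) →⋆ₐ[ℂ] (lp (fun _ : ι => E) 2 →L[ℂ] lp (fun _ : ι => E) 2) where
  toFun := weightedPullback (.refl ι)
  map_one' := rfl
  map_mul' _ _ := rfl
  map_zero' := rfl
  map_add' _ _ := rfl
  commutes' _ := rfl
  map_star' A := by
    refine (eq_adjoint_iff _ _).mpr fun u v => ?_
    simp only [lp.inner_eq_tsum, weightedPullback_apply, star_eq_adjoint, adjoint_inner_left,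
      Function.Embedding.refl_apply]

theorem matrixEntry_ampliation {ι : Type*} [DecidableEq ι] (A : H →L[ℂ] H) (α β : ι) :
    matrixEntry (ampliation ι H A) α β = if α = β then A else 0 := by
  ext h
  change A ((lp.single 2 β h : lp (fun _ : ι => H) 2) α) = _
  rw [lp.coeFn_single, Pi.single_apply]
  split_ifs with hαβ
  · subst hαβ; rfl
  · simp

theorem algebraMap_le_comp_comp_adjoint {E G : Type*} [NormedAddCommGroup E]
    [InnerProductSpace ℂ E] [CompleteSpace E] [NormedAddCommGroup G] [InnerProductSpace ℂ G]
    [CompleteSpace G] {a : ℝ} (ha : 0 ≤ a) {P : E →L[ℂ] E} (hP : algebraMap ℝ _ a ≤ P)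
    {F : E →L[ℂ] G} {V : G →L[ℂ] E} (hV : ‖V‖ ≤ 1) (hFV : F ∘L V = 1) :
    algebraMap ℝ _ a ≤ F ∘L P ∘L adjoint F := by
  have hVV : V ∘L adjoint V ≤ 1 := by
    refine (CStarAlgebra.norm_le_one_iff_of_nonneg _
      ((nonneg_iff_isPositive _).mpr (isPositive_self_comp_adjoint V))).mp ?_
    refine (opNorm_comp_le _ _).trans (mul_le_one₀ hV (norm_nonneg _) ?_)
    rwa [LinearIsometryEquiv.norm_map]
  have hpos : 0 ≤ P - a • (V ∘L adjoint V) := by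
    refine sub_nonneg.mpr (le_trans ?_ hP)
    rw [Algebra.algebraMap_eq_smul_one]
    exact smul_le_smul_of_nonneg_left hVV ha
  have hVF : adjoint V ∘L adjoint F = 1 := by
    rw [← adjoint_comp, hFV, ← star_eq_adjoint, star_one]
  have hconj : F ∘L (P - a • (V ∘L adjoint V)) ∘L adjoint F =
      F ∘L P ∘L adjoint F - algebraMap ℝ _ a :=
    calc F ∘L (P - a • (V ∘L adjoint V)) ∘L adjoint F
        = F ∘L P ∘L adjoint F - a • ((F ∘L V) ∘L (adjoint V ∘L adjoint F)) := by
          ext; simp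
      _ = F ∘L P ∘L adjoint F - algebraMap ℝ _ a := by
          rw [hFV, hVF, Algebra.algebraMap_eq_smul_one]; rfl
  rw [← sub_nonneg, ← hconj, nonneg_iff_isPositive]
  exact ((nonneg_iff_isPositive _).mp hpos).conj_adjoint F

theorem adjoint_evalCLM {ι : Type*} [DecidableEq ι] (i : ι) :
    adjoint (lp.evalCLM ℂ (fun _ : ι => H) 2 i : lp (fun _ : ι => H) 2 →L[ℂ] H) =
      lp.singleContinuousLinearMap ℂ (fun _ : ι => H) 2 i :=
  ((eq_adjoint_iff _ _).mpr fun h u => lp.inner_single_left (𝕜 := ℂ) i h u).symm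

theorem algebraMap_le_matrixEntry_conj {ι : Type*} [DecidableEq ι] {i : ι}
    {S P : lp (fun _ : ι => H) 2 →L[ℂ] lp (fun _ : ι => H) 2}
    (hS : ∀ h, S (lp.single 2 i h) = lp.single 2 i h) {a : ℝ} (ha : 0 ≤ a)
    (hP : algebraMap ℝ _ a ≤ P) : algebraMap ℝ _ a ≤ matrixEntry (S * P * star S) i i := by
  let V : H →L[ℂ] lp (fun _ : ι => H) 2 := lp.singleContinuousLinearMap ℂ (fun _ : ι => H) 2 i
  let F : lp (fun _ : ι => H) 2 →L[ℂ] H := lp.evalCLM ℂ (fun _ : ι => H) 2 i ∘L S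
  have hV : ‖V‖ ≤ 1 := V.opNorm_le_bound zero_le_one fun h => by
    rw [one_mul]
    exact (lp.norm_single (E := fun _ : ι => H) (by norm_num) i h).le
  have hFV : F ∘L V = 1 := by
    ext h
    change S (lp.single 2 i h) i = h
    rw [hS, lp.single_apply_self]
  have hF : adjoint F = star S ∘L V := by
    refine (adjoint_comp _ _).trans ?_
    rw [adjoint_evalCLM, star_eq_adjoint]
  have hcompress := algebraMap_le_comp_comp_adjoint ha hP hV hFV
  rw [hF] at hcompress
  exact hcompress

section BackwardShift

variable {n : ℕ} {𝕜 E : Type*} [NontriviallyNormedField 𝕜] [NormedAddCommGroup E]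
  [NormedSpace 𝕜 E]

/-- The operator `S_i* ⊗ A` on `ℓ²(ℕⁿ; E)`, where `S_i* δ_α = δ_{α - e_i}` is the backward shift
in direction `i`. -/
def backwardShift (i : Fin n) (A : E →L[𝕜] E) : L2 n E →L[𝕜] L2 n E :=
  weightedPullback (addRightEmbedding (Pi.single i 1)) A

theorem backwardShift_single_zero (i : Fin n) (A : E →L[𝕜] E) (h : E) :
    backwardShift i A (lp.single 2 0 h) = 0 := by
  ext α
  have hα : α + Pi.single i 1 ≠ 0 := fun h0 => by simpa using congr_fun h0 i
  change A ((lp.single 2 0 h : L2 n E) (α + Pi.single i 1)) = 0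
  rw [lp.coeFn_single, Pi.single_eq_of_ne hα, map_zero]

/-- The product of the factors `I - S_i* ⊗ T_i`, `i ∈ l`. Conjugating the Poisson kernel of `T` by
it applies `id - Φ_{T_i}` to the operator entries along the diagonal, for `i ∈ l`. -/
def shiftFactor (T : Fin n → (E →L[𝕜] E)) (l : List (Fin n)) : L2 n E →L[𝕜] L2 n E :=
  (l.map fun i => 1 - backwardShift i (T i)).prod

theorem shiftFactor_single_zero (T : Fin n → (E →L[𝕜] E)) (l : List (Fin n)) (h : E) :
    shiftFactor T l (lp.single 2 0 h) = lp.single 2 0 h := by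
  induction l with
  | nil => rfl
  | cons i l ih =>
    change shiftFactor T l (lp.single 2 0 h) -
      backwardShift i (T i) (shiftFactor T l (lp.single 2 0 h)) = _
    rw [ih, backwardShift_single_zero, sub_zero]

end BackwardShift

section PoissonKernel

open MvPolynomial

variable {n : ℕ} {T : Fin n → (H →L[ℂ] H)}

theorem star_backwardShift_single (i : Fin n) (A : H →L[ℂ] H) (β : Fin n → ℕ) (h : H) :
    star (backwardShift i A) (lp.single 2 β h) = lp.single 2 (β + Pi.single i 1) (star A h) := by
  refine ext_inner_right ℂ fun u => ?_
  simp only [star_eq_adjoint, adjoint_inner_left, lp.inner_single_left]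
  rfl

theorem matrixEntry_conj_one_sub_backwardShift (i : Fin n) (A : H →L[ℂ] H)
    (Q : L2 n H →L[ℂ] L2 n H) (α β : Fin n → ℕ) :
    matrixEntry ((1 - backwardShift i A) * Q * star (1 - backwardShift i A)) α β =
      matrixEntry Q α β - A * matrixEntry Q (α + Pi.single i 1) β
        - matrixEntry Q α (β + Pi.single i 1) * star A
        + A * (matrixEntry Q (α + Pi.single i 1) (β + Pi.single i 1) * star A) := by
  have hstar (R : L2 n H →L[ℂ] L2 n H) (γ : Fin n → ℕ) :
      matrixEntry (R * star (backwardShift i A)) γ β =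
        matrixEntry R γ (β + Pi.single i 1) * star A := by
    ext h
    change R (star (backwardShift i A) (lp.single 2 β h)) γ = _
    rw [star_backwardShift_single]
    rfl
  have hleft (R : L2 n H →L[ℂ] L2 n H) (γ : Fin n → ℕ) :
      matrixEntry (backwardShift i A * R) α γ = A * matrixEntry R (α + Pi.single i 1) γ := rfl
  rw [star_sub, star_one, mul_sub, mul_one, sub_mul, one_mul, matrixEntry_sub, matrixEntry_sub,
    hleft, hstar, matrixEntry_sub, hleft, sub_mul, mul_assoc]
  abel

/-- `P` is the pluriharmonic Poisson kernel `𝒫(R, T)`, given by its operator matrix. -/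
def HasPoissonMatrix (T : Fin n → (H →L[ℂ] H)) (P : L2 n H →L[ℂ] L2 n H) : Prop :=
  ∀ α β, matrixEntry P α β = (List.ofFn fun i => T i ^ (β i - α i)).prod *
    (List.ofFn fun i => star (T i) ^ (α i - β i)).prod

theorem prod_ofFn_smul_pow {R A : Type*} [CommMonoid R] [Monoid A] [MulAction R A]
    [IsScalarTower R A A] [SMulCommClass R A A] (c : R) (a : Fin n → A) (m : Fin n → ℕ) :
    (List.ofFn fun i => (c • a i) ^ m i).prod =
      c ^ (∑ i, m i) • (List.ofFn fun i => a i ^ m i).prod := by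
  induction n with
  | zero => simp
  | succ n ih =>
    rw [List.ofFn_succ, List.prod_cons, ih, Fin.sum_univ_succ, smul_pow, smul_mul_smul_comm,
      ← pow_add, List.ofFn_succ, List.prod_cons]

theorem IsPoissonKernel.hasPoissonMatrix {r : ℝ} {P : L2 n H →L[ℂ] L2 n H}
    (hP : IsPoissonKernel T r P) : HasPoissonMatrix (fun i => (r : ℂ) • T i) P := by
  intro α β
  ext h
  refine ext_inner_right ℂ fun l => ?_
  have hstar (i : Fin n) : star ((r : ℂ) • T i) = (r : ℂ) • adjoint (T i) := by
    rw [star_smul, Complex.star_def, Complex.conj_ofReal, star_eq_adjoint]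
  have hentry := hP α β h l
  rw [lp.inner_single_right] at hentry
  simp only [hstar, prod_ofFn_smul_pow]
  rw [matrixEntry_apply, hentry, smul_mul_smul_comm, ← pow_add, smul_apply, inner_smul_left,
    add_comm, ← Finset.sum_add_distrib]
  simp

namespace HasPoissonMatrix

variable {P : L2 n H →L[ℂ] L2 n H}

theorem matrixEntry_conj_shiftFactor (hP : HasPoissonMatrix T P)
    (hT : ∀ i j, Commute (T i) (T j)) {l : List (Fin n)} (hl : l.Nodup) (α β : Fin n → ℕ) :
    matrixEntry (shiftFactor T l * P * star (shiftFactor T l)) α β = hereditary T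
      (toeplitzSymbol (fun i => X (.inl i)) (fun i => X (.inr i)) l.toFinset α β) := by
  induction l generalizing α β with
  | nil =>
    rw [shiftFactor, List.map_nil, List.prod_nil, star_one, one_mul, mul_one, hP,
      List.toFinset_nil, toeplitzSymbol_empty, hereditary.prod_pow_mul_prod_pow]
  | cons i l ih =>
    have hi : i ∉ l.toFinset := by simpa using (List.nodup_cons.mp hl).1
    have hcons : shiftFactor T (i :: l) = (1 - backwardShift i (T i)) * shiftFactor T l := rfl
    have hassoc : shiftFactor T (i :: l) * P * star (shiftFactor T (i :: l)) =
        (1 - backwardShift i (T i)) * (shiftFactor T l * P * star (shiftFactor T l)) *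
          star (1 - backwardShift i (T i)) := by
      rw [hcons, star_mul]
      simp only [mul_assoc]
    rw [hassoc, matrixEntry_conj_one_sub_backwardShift, List.toFinset_cons,
      toeplitzSymbol_insert _ _ hi]
    simp only [ih (List.nodup_cons.mp hl).2, map_add, map_sub, hereditary.X_inl_mul hT,
      hereditary.X_inr_mul hT]

theorem conj_shiftFactor_finRange (hP : HasPoissonMatrix T P) (hT : ∀ i j, Commute (T i) (T j)) :
    shiftFactor T (List.finRange n) * P * star (shiftFactor T (List.finRange n)) =
      ampliation (Fin n → ℕ) H (defect T) := by
  refine ext_matrixEntry fun α β => ?_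
  rw [hP.matrixEntry_conj_shiftFactor hT (List.nodup_finRange n), List.toFinset_finRange,
    toeplitzSymbol_univ, matrixEntry_ampliation, apply_ite (hereditary T), map_zero,
    defect_eq_hereditary hT]

theorem algebraMap_le_defect (hP : HasPoissonMatrix T P) (hT : ∀ i j, Commute (T i) (T j))
    {a : ℝ} (ha : 0 ≤ a) (haP : algebraMap ℝ _ a ≤ P) : algebraMap ℝ _ a ≤ defect T := by
  have h := algebraMap_le_matrixEntry_conj
    (shiftFactor_single_zero T (List.finRange n)) ha haP
  rwa [hP.conj_shiftFactor_finRange hT, matrixEntry_ampliation, if_pos rfl] at h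

theorem algebraMap_le_one_sub_mul_star (hP : HasPoissonMatrix T P)
    (hT : ∀ i j, Commute (T i) (T j)) {a : ℝ} (ha : 0 ≤ a) (haP : algebraMap ℝ _ a ≤ P)
    (i : Fin n) : algebraMap ℝ _ a ≤ 1 - T i * star (T i) := by
  have h := algebraMap_le_matrixEntry_conj (shiftFactor_single_zero T [i]) ha haP
  have hmul := hereditary.one_sub_mul hT 1 i 1
  rw [C_1, one_mul, mul_one, hereditary.map_one, mul_one, one_smul] at hmul
  rwa [hP.matrixEntry_conj_shiftFactor hT (List.nodup_singleton i), List.toFinset_cons,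
    List.toFinset_nil, insert_empty_eq, toeplitzSymbol_singleton_self, hmul] at h

theorem algebraMap_le_and_le_algebraMap (hP : HasPoissonMatrix T P)
    (hT : ∀ i j, Commute (T i) (T j)) {ρ a b c d : ℝ} (hTρ : ∀ i, ‖T i‖ ≤ ρ) (hρ : ρ < 1)
    (haT : algebraMap ℝ _ a ≤ defect T) (hb : 0 ≤ b) (hbT : defect T ≤ algebraMap ℝ _ b)
    (hc : 0 ≤ c) (hca : c * (2 ^ n) ^ 2 ≤ a) (hbd : b * ((1 - ρ)⁻¹ ^ n) ^ 2 ≤ d) :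
    algebraMap ℝ _ c ≤ P ∧ P ≤ algebraMap ℝ _ d := by
  have hshift (i : Fin n) : ‖backwardShift i (T i)‖ ≤ ρ :=
    (norm_weightedPullback_le _ _).trans (hTρ i)
  obtain ⟨u, hu, hnorm, hnorm_inv⟩ :=
    exists_unit_eq_prod_map_one_sub norm_id_le (List.finRange n) hshift hρ
  rw [List.length_finRange] at hnorm hnorm_inv
  have hconj : u * P * star (u : L2 n H →L[ℂ] L2 n H) = ampliation (Fin n → ℕ) H (defect T) := by
    rw [hu]
    exact hP.conj_shiftFactor_finRange hT
  have hscalar (t : ℝ) : ampliation (Fin n → ℕ) H (algebraMap ℝ _ t) =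
      algebraMap ℝ (L2 n H →L[ℂ] L2 n H) t :=
    AlgHomClass.commutes ((ampliation (Fin n → ℕ) H).toAlgHom.restrictScalars ℝ) t
  have hmono := OrderHomClass.mono (ampliation (Fin n → ℕ) H)
  constructor
  · refine algebraMap_le_of_le_star_right_conjugate hc hnorm hca ?_
    rw [hconj]
    exact (hscalar a).symm.trans_le (hmono haT)
  · refine le_algebraMap_of_star_right_conjugate_le hb hnorm_inv hbd ?_
    rw [hconj]
    exact (hmono hbT).trans_eq (hscalar b)

end HasPoissonMatrix

end PoissonKernel

section Polydisk

variable {n : ℕ} {T : Fin n → (H →L[ℂ] H)} {P : ℝ → (L2 n H →L[ℂ] L2 n H)}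

theorem memPolydisk_of_algebraMap_le (hT : ∀ i j, Commute (T i) (T j)) {a : ℝ} (ha : 0 < a)
    (hP : ∀ r ∈ Set.Ico (0 : ℝ) 1, IsPoissonKernel T r (P r))
    (haP : ∀ r ∈ Set.Ico (0 : ℝ) 1, algebraMap ℝ _ a ≤ P r) : memPolydisk T := by
  have hrT (r : ℝ) (i j : Fin n) : Commute ((r : ℂ) • T i) ((r : ℂ) • T j) :=
    ((hT i j).smul_left _).smul_right _
  have hdefect : algebraMap ℝ _ a ≤ defect T := by
    simpa using le_of_forall_Ico_le_of_continuous
      (f := fun r : ℝ => defect fun i => (r : ℂ) • T i) zero_lt_one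
      (continuous_defect.comp (by fun_prop))
      fun r hr => (hP r hr).hasPoissonMatrix.algebraMap_le_defect (hrT r) ha.le (haP r hr)
  have hone_sub (i : Fin n) : algebraMap ℝ _ a ≤ 1 - T i * star (T i) := by
    simpa using le_of_forall_Ico_le_of_continuous
      (f := fun r : ℝ => 1 - ((r : ℂ) • T i) * star ((r : ℂ) • T i)) zero_lt_one
      (by fun_prop)
      fun r hr => (hP r hr).hasPoissonMatrix.algebraMap_le_one_sub_mul_star (hrT r) ha.le
        (haP r hr) i
  have hpos := isStrictlyPositive_iff_exists_algebraMap_le.mpr ⟨a, ha, hdefect⟩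
  exact ⟨hT, fun i => norm_lt_one_of_algebraMap_le_one_sub_mul_star ha (hone_sub i),
    (nonneg_iff_isPositive _).mp hpos.nonneg, hpos.isUnit⟩

theorem exists_forall_inv_sq_le_and_le_sq (hT : memPolydisk T)
    (hP : ∀ r ∈ Set.Ico (0 : ℝ) 1, IsPoissonKernel T r (P r)) :
    ∃ c : ℝ, 1 ≤ c ∧ ∀ r ∈ Set.Ico (0 : ℝ) 1,
      algebraMap ℝ _ (c ^ 2)⁻¹ ≤ P r ∧ P r ≤ algebraMap ℝ _ (c ^ 2) := by
  obtain ⟨hcomm, hnorm, hpos, hunit⟩ := hT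
  have hnonneg : 0 ≤ defect T := (nonneg_iff_isPositive _).mpr hpos
  obtain ⟨ε, hε, hεT⟩ := isStrictlyPositive_iff_exists_algebraMap_le.mp
    (IsStrictlyPositive.iff_of_unital.mpr ⟨hnonneg, hunit⟩)
  have hρ : ‖T‖ < 1 := (pi_norm_lt_iff zero_lt_one).mpr hnorm
  have hε_div : 0 < ε / (2 ^ n) ^ 2 := by positivity
  obtain ⟨c, hc, hc_lower, hc_upper⟩ :=
    exists_one_le_inv_sq_le_and_le_sq hε_div (1 * ((1 - ‖T‖)⁻¹ ^ n) ^ 2)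
  refine ⟨c, hc, fun r hr => ?_⟩
  have hrcomm (i j : Fin n) : Commute ((r : ℂ) • T i) ((r : ℂ) • T j) :=
    ((hcomm i j).smul_left _).smul_right _
  have hrnorm (i : Fin n) : ‖(r : ℂ) • T i‖ ≤ ‖T‖ := by
    rw [norm_smul, Complex.norm_real, Real.norm_of_nonneg hr.1]
    exact (mul_le_of_le_one_left (norm_nonneg _) hr.2.le).trans (norm_le_pi_norm T i)
  have hle : defect T ≤ defect fun i => (r : ℂ) • T i :=
    defect_le_defect_ofReal_smul hcomm hnorm hnonneg (pow_le_one₀ hr.1 hr.2.le)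
  have hle_one : defect (fun i => (r : ℂ) • T i) ≤ 1 :=
    defect_le_one hrcomm (fun i => (hrnorm i).trans_lt hρ) (hnonneg.trans hle)
  exact (hP r hr).hasPoissonMatrix.algebraMap_le_and_le_algebraMap hrcomm hrnorm hρ
    (hεT.trans hle) zero_le_one (hle_one.trans_eq (map_one _).symm) (by positivity)
    ((le_div_iff₀ (by positivity)).mp hc_lower) hc_upper

end Polydisk

theorem opLE_ofReal_smul_one_left {E : Type*} [NormedAddCommGroup E] [InnerProductSpace ℂ E]
    [CompleteSpace E] {a : ℝ} {Q : E →L[ℂ] E} : opLE ((a : ℂ) • 1) Q ↔ algebraMap ℝ _ a ≤ Q :=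
  Iff.rfl

theorem opLE_ofReal_smul_one_right {E : Type*} [NormedAddCommGroup E] [InnerProductSpace ℂ E]
    [CompleteSpace E] {a : ℝ} {Q : E →L[ℂ] E} : opLE Q ((a : ℂ) • 1) ↔ Q ≤ algebraMap ℝ _ a :=
  Iff.rfl

theorem stmt_9_general (X : Fin k → (H →L[ℂ] H)) (hX : ∀ i j, Commute (X i) (X j))
    (P : ℝ → (L2 k H →L[ℂ] L2 k H))
    (hP : ∀ r ∈ Set.Ico (0 : ℝ) 1, IsPoissonKernel X r (P r)) :
    (((∀ i, spectralRadius ℂ (X i) < 1) ∧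
        ∃ a : ℝ, 0 < a ∧ ∀ r ∈ Set.Ico (0 : ℝ) 1,
          opLE (((a : ℝ) : ℂ) • (1 : L2 k H →L[ℂ] L2 k H)) (P r)) ↔
      memPolydisk X) ∧
    (memPolydisk X ↔
      ∃ c : ℝ, 1 ≤ c ∧ ∀ r ∈ Set.Ico (0 : ℝ) 1,
        opLE (((c : ℂ) ^ 2)⁻¹ • (1 : L2 k H →L[ℂ] L2 k H)) (P r) ∧
        opLE (P r) (((c : ℂ) ^ 2) • (1 : L2 k H →L[ℂ] L2 k H))) := by
  simp only [← Complex.ofReal_pow, ← Complex.ofReal_inv, opLE_ofReal_smul_one_left,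
    opLE_ofReal_smul_one_right]
  refine ⟨⟨?_, fun hmem => ⟨?_, ?_⟩⟩, fun hmem => exists_forall_inv_sq_le_and_le_sq hmem hP, ?_⟩
  · rintro ⟨-, a, ha, hlower⟩
    exact memPolydisk_of_algebraMap_le hX ha hP hlower
  · exact fun i => spectralRadius_lt_one_of_norm_lt_one norm_id_le (hmem.2.1 i)
  · obtain ⟨c, hc, hbounds⟩ := exists_forall_inv_sq_le_and_le_sq hmem hP
    exact ⟨(c ^ 2)⁻¹, by positivity, fun r hr => (hbounds r hr).1⟩
  · rintro ⟨c, hc, hbounds⟩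
    have hlower : 0 < (c ^ 2)⁻¹ := by positivity
    exact memPolydisk_of_algebraMap_le hX hlower hP fun r hr => (hbounds r hr).1

/-- For `X ∈ D^k(H)⁻` the following are equivalent:
(i) every `X_i` has spectral radius `< 1` and `𝒫(R, rX) ≥ a I` for some `a > 0` and all
`r ∈ [0,1)`; (ii) `X ∈ D^k(H)`; (iii) there is `c ≥ 1` with `c⁻² I ≤ 𝒫(R, rX) ≤ c² I`
for all `r ∈ [0,1)`. -/
theorem stmt_9 (hk : 1 ≤ k) (X : Fin k → (H →L[ℂ] H)) (hX : memClosedPolydisk X)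
    (P : ℝ → (L2 k H →L[ℂ] L2 k H))
    (hP : ∀ r ∈ Set.Ico (0 : ℝ) 1, IsPoissonKernel X r (P r)) :
    (((∀ i, spectralRadius ℂ (X i) < 1) ∧
        ∃ a : ℝ, 0 < a ∧ ∀ r ∈ Set.Ico (0 : ℝ) 1,
          opLE (((a : ℝ) : ℂ) • (1 : L2 k H →L[ℂ] L2 k H)) (P r)) ↔
      memPolydisk X) ∧
    (memPolydisk X ↔
      ∃ c : ℝ, 1 ≤ c ∧ ∀ r ∈ Set.Ico (0 : ℝ) 1,
        opLE (((c : ℂ) ^ 2)⁻¹ • (1 : L2 k H →L[ℂ] L2 k H)) (P r) ∧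
        opLE (P r) (((c : ℂ) ^ 2) • (1 : L2 k H →L[ℂ] L2 k H))) := by
  exact stmt_9_general X hX.1 P hP

end
end

section
/- Let A = (A_1,…,A_k) and B = (B_1,…,B_k) be k-tuples of pairwise commuting contractions on a complex Hilbert space H. Then for every i ∈ {1,…,k}, ‖A_i − B_i‖ ≤ sup_{r∈[0,1)} ‖𝒫(R, rA) − 𝒫(R, rB)‖. -/
/-!
The Poisson kernel is a block operator matrix whose entry at row `0` and column `e_i` is `r X_i`.
A block entry is bounded by the norm of the whole matrix, so
`r ‖A_i - B_i‖ ≤ ‖𝒫(R, rA) - 𝒫(R, rB)‖` for every single `r`, and `r → 1` gives the claim.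
-/

open ContinuousLinearMap

noncomputable section

variable {k : ℕ} {H : Type*} [NormedAddCommGroup H] [InnerProductSpace ℂ H] [CompleteSpace H]

open scoped ENNReal

theorem norm_map_single_apply_le {𝕜 ι κ : Type*} [NontriviallyNormedField 𝕜] [DecidableEq ι]
    {E : ι → Type*} [∀ i, NormedAddCommGroup (E i)] [∀ i, NormedSpace 𝕜 (E i)]
    {F : κ → Type*} [∀ j, NormedAddCommGroup (F j)] [∀ j, NormedSpace 𝕜 (F j)]
    {p q : ℝ≥0∞} [Fact (1 ≤ p)] [Fact (1 ≤ q)]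
    (T : lp E p →L[𝕜] lp F q) (i : ι) (j : κ) (x : E i) :
    ‖T (lp.single p i x) j‖ ≤ ‖T‖ * ‖x‖ := by
  have hp : 0 < p := zero_lt_one.trans_le Fact.out
  have hq : q ≠ 0 := (zero_lt_one.trans_le Fact.out).ne'
  calc ‖T (lp.single p i x) j‖ ≤ ‖T (lp.single p i x)‖ := lp.norm_apply_le_norm hq _ j
    _ ≤ ‖T‖ * ‖lp.single p i x‖ := T.le_opNorm _
    _ = ‖T‖ * ‖x‖ := by rw [lp.norm_single hp]

theorem prod_ofFn_pow_single {M : Type*} [Monoid M] {n : ℕ} (x : Fin n → M) (i : Fin n) (m : ℕ) :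
    (List.ofFn fun j => x j ^ (Pi.single i m : Fin n → ℕ) j).prod = x i ^ m := by
  rw [List.ofFn_eq_map, List.prod_map_eq_pow_single i, List.count_finRange, pow_one,
    Pi.single_eq_same]
  intro j hj _
  rw [Pi.single_eq_of_ne hj, pow_zero]

namespace IsPoissonKernel

theorem apply_single {X : Fin k → (H →L[ℂ] H)} {r : ℝ} {P : L2 k H →L[ℂ] L2 k H}
    (hP : IsPoissonKernel X r P) (α β : Fin k → ℕ) (h : H) :
    P (lp.single 2 β h) α =
      ((r ^ (∑ i, ((α i - β i) + (β i - α i))) : ℝ) : ℂ) •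
        ((List.ofFn fun i => X i ^ (β i - α i)).prod *
          (List.ofFn fun i => (adjoint (X i)) ^ (α i - β i)).prod) h := by
  refine ext_inner_right ℂ fun ℓ => ?_
  rw [← lp.inner_single_right, hP, inner_smul_left, Complex.conj_ofReal]

theorem apply_single_single_zero {X : Fin k → (H →L[ℂ] H)} {r : ℝ} {P : L2 k H →L[ℂ] L2 k H}
    (hP : IsPoissonKernel X r P) (i : Fin k) (m : ℕ) (h : H) :
    P (lp.single 2 (Pi.single i m) h) 0 = (r : ℂ) ^ m • (X i ^ m) h := by
  have degree : ∑ j, (Pi.single i m : Fin k → ℕ) j = m := Fintype.sum_pi_single' i m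
  simp [hP.apply_single, prod_ofFn_pow_single, degree]

theorem abs_pow_mul_norm_pow_sub_le {A B : Fin k → (H →L[ℂ] H)} {r : ℝ} {P Q : L2 k H →L[ℂ] L2 k H}
    (hP : IsPoissonKernel A r P) (hQ : IsPoissonKernel B r Q) (i : Fin k) (m : ℕ) :
    |r| ^ m * ‖A i ^ m - B i ^ m‖ ≤ ‖P - Q‖ := by
  have entry (h : H) :
      (P - Q) (lp.single 2 (Pi.single i m) h) 0 = ((r : ℂ) ^ m • (A i ^ m - B i ^ m)) h := by
    simp only [sub_apply, smul_apply, lp.coeFn_sub, Pi.sub_apply, smul_sub,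
      hP.apply_single_single_zero, hQ.apply_single_single_zero]
  calc |r| ^ m * ‖A i ^ m - B i ^ m‖ = ‖(r : ℂ) ^ m • (A i ^ m - B i ^ m)‖ := by
        rw [norm_smul, norm_pow, Complex.norm_real, Real.norm_eq_abs]
    _ ≤ ‖P - Q‖ := opNorm_le_bound _ (norm_nonneg _) fun h =>
        entry h ▸ norm_map_single_apply_le (P - Q) (Pi.single i m) 0 h

end IsPoissonKernel

theorem stmt_11_general (A B : Fin k → (H →L[ℂ] H)) (PA PB : ℝ → (L2 k H →L[ℂ] L2 k H))
    (hPA : ∀ r ∈ Set.Ico (0 : ℝ) 1, IsPoissonKernel A r (PA r))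
    (hPB : ∀ r ∈ Set.Ico (0 : ℝ) 1, IsPoissonKernel B r (PB r)) (i : Fin k) :
    (‖A i - B i‖₊ : ℝ≥0∞) ≤ ⨆ r ∈ Set.Ico (0 : ℝ) 1, (‖PA r - PB r‖₊ : ℝ≥0∞) := by
  refine ENNReal.le_of_forall_lt_one_mul_le fun a ha => ?_
  lift a to NNReal using ha.ne_top
  have hr : (a : ℝ) ∈ Set.Ico (0 : ℝ) 1 := ⟨a.2, by exact_mod_cast ha⟩
  have bound : a * ‖A i - B i‖₊ ≤ ‖PA a - PB a‖₊ := by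
    simpa only [pow_one, NNReal.abs_eq, ← NNReal.coe_le_coe, NNReal.coe_mul, coe_nnnorm] using
      (hPA a hr).abs_pow_mul_norm_pow_sub_le (hPB a hr) i 1
  calc (a : ℝ≥0∞) * ‖A i - B i‖₊ ≤ ‖PA a - PB a‖₊ := by exact_mod_cast bound
    _ ≤ ⨆ r ∈ Set.Ico (0 : ℝ) 1, (‖PA r - PB r‖₊ : ℝ≥0∞) :=
      le_iSup₂ (f := fun r (_ : r ∈ Set.Ico (0 : ℝ) 1) => (‖PA r - PB r‖₊ : ℝ≥0∞)) (a : ℝ) hr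

/-- For `k`-tuples `A`, `B` of pairwise commuting contractions,
`‖A_i - B_i‖ ≤ sup_{r ∈ [0,1)} ‖𝒫(R, rA) - 𝒫(R, rB)‖` for every `i` (the supremum being
taken in `ℝ≥0∞`). -/
theorem stmt_11 (hk : 1 ≤ k) (A B : Fin k → (H →L[ℂ] H))
    (hAco : ∀ i j, Commute (A i) (A j)) (hA1 : ∀ i, ‖A i‖ ≤ 1)
    (hBco : ∀ i j, Commute (B i) (B j)) (hB1 : ∀ i, ‖B i‖ ≤ 1)
    (PA PB : ℝ → (L2 k H →L[ℂ] L2 k H))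
    (hPA : ∀ r ∈ Set.Ico (0 : ℝ) 1, IsPoissonKernel A r (PA r))
    (hPB : ∀ r ∈ Set.Ico (0 : ℝ) 1, IsPoissonKernel B r (PB r)) :
    ∀ i, (‖A i - B i‖₊ : ℝ≥0∞) ≤ ⨆ r ∈ Set.Ico (0 : ℝ) 1, (‖PA r - PB r‖₊ : ℝ≥0∞) :=
  stmt_11_general A B PA PB hPA hPB

end
end
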